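/- Let X = A_7 be embedded in Y = D_{35} = SO_{70} via the 70-dimensional irreducible representation of highest weight δ = ω_4, and let V = V_Y(λ_{35}) be a half-spin module for Y (of dimension 2^{34}). Then V↓X is multiplicity-free; more precisely, V↓X is the direct sum of exactly 36 pairwise non-isomorphic irreducible X-modules; in particular the sum of the dimensions of these 36 irreducibles equals 2^{34}. -/

import Mathlib

/-!
# Common framework

Over an algebraically closed field of characteristic zero, finite–dimensional rational
representations of a simple algebraic group are semisimple and are determined by their
formal characters, i.e. by elements of the group ring of the (rational) weight lattice;
the character of the irreducible module of highest weight `λ` is pinned down by the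
Weyl character formula `A_ρ · χ_λ = A_{λ+ρ}`.

Below we model, completely combinatorially:

* type `A_r` : weights are realised by their traceless representatives in `Fin (r+1) → ℚ`
  (the `gl`-coordinates), and the Weyl group is the symmetric group;
* types `B_n, C_n, D_n` : weights are realised in the standard `ε`-coordinates
  `Fin n → ℚ`, and the Weyl group consists of (signed) permutations, with evenly many
  sign changes in type `D`;
* an embedding `X = A_r < Y` (classical of type `t` and rank `n`) in which `X` acts on
  the natural module `W` of `Y` irreducibly with highest weight `δ` : the weights of `W`
  are `± w i` (plus one zero weight in type `B`), and restriction of characters is induced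
  by the map `v ↦ ∑ i, v i • w i` of weight lattices;
* `IsMFRes t n r δ lam` : the restriction to `X` of the irreducible `Y`-module with
  highest weight `lam` is multiplicity-free, i.e. its character is a sum of distinct
  irreducible characters of `X`.

Dominant weights are always recorded by their (natural number) coordinates in the basis
of fundamental weights, `e n k` being the `k`-th fundamental weight (1-indexed).
-/

noncomputable section

namespace MFPaper

/-- The Dynkin type of a classical group `B_n = SO_{2n+1}`, `C_n = Sp_{2n}`, `D_n = SO_{2n}`. -/
inductive CType | B | C | D
deriving DecidableEq

/-- The character ring: the integral group ring of a rational weight space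
with `k` coordinates. -/
abbrev CharRing (k : ℕ) : Type := AddMonoidAlgebra ℤ (Fin k → ℚ)

/-- The formal exponential `e^v` of a weight `v`. -/
def mono {k : ℕ} (v : Fin k → ℚ) : CharRing k := AddMonoidAlgebra.single v 1

/-- `e n k` : the `k`-th fundamental dominant weight (`1 ≤ k ≤ n`, 1-indexed) of a rank `n`
group, recorded by its coordinates in the basis of fundamental weights. -/
def e (n k : ℕ) : Fin n → ℕ := fun i => if (i : ℕ) + 1 = k then 1 else 0

/-! ### Type `A_r` -/

/-- The partition (`gl`) lift of the dominant weight of `A_r` with coordinates `d`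
in the basis of fundamental weights. -/
def partLift (r : ℕ) (d : Fin r → ℕ) : Fin (r + 1) → ℚ := fun i =>
  ∑ j ∈ Finset.univ.filter (fun j : Fin r => (i : ℕ) ≤ (j : ℕ)), (d j : ℚ)

/-- The traceless (`sl`) representative of the dominant weight of `A_r` with coordinates `d`. -/
def slWt (r : ℕ) (d : Fin r → ℕ) : Fin (r + 1) → ℚ := fun i =>
  partLift r d i - (∑ j : Fin r, (((j : ℕ) : ℚ) + 1) * (d j : ℚ)) / (r + 1)

/-- A lift of the half-sum of the positive roots of `A_r`. -/
def rhoA (r : ℕ) : Fin (r + 1) → ℚ := fun i => (r : ℚ) - (i : ℕ)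

/-- The Weyl alternating sum `A_v = ∑_{σ} sgn(σ) e^{σ v}` for type `A_r`. -/
def altA (r : ℕ) (v : Fin (r + 1) → ℚ) : CharRing (r + 1) :=
  ∑ σ : Equiv.Perm (Fin (r + 1)),
    ((Equiv.Perm.sign σ : ℤˣ) : ℤ) • mono (fun i => v (σ i))

/-- `IsCharA r d f` : `f` is the formal character of the irreducible `A_r`-module
of highest weight `d` (Weyl character formula). -/
def IsCharA (r : ℕ) (d : Fin r → ℕ) (f : CharRing (r + 1)) : Prop :=
  altA r (rhoA r) * f = altA r (slWt r d + rhoA r)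

/-- `Decomp r F c` : the character `F` of a representation of `A_r` decomposes as
`∑_μ (c μ) · χ_μ`, i.e. the irreducible of highest weight `μ` occurs in it as a
composition factor with multiplicity `c μ`. -/
def Decomp (r : ℕ) (F : CharRing (r + 1)) (c : (Fin r → ℕ) →₀ ℕ) : Prop :=
  F * altA r (rhoA r) = c.sum fun μ k => (k : ℤ) • altA r (slWt r μ + rhoA r)

/-- The Weyl dimension formula for type `A_r`. -/
def dimA (r : ℕ) (d : Fin r → ℕ) : ℚ :=
  ∏ p ∈ Finset.univ.filter (fun p : Fin (r + 1) × Fin (r + 1) => (p.1 : ℕ) < (p.2 : ℕ)),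
    ((partLift r d p.1 - partLift r d p.2 + ((p.2 : ℕ) : ℚ) - ((p.1 : ℕ) : ℚ)) /
      (((p.2 : ℕ) : ℚ) - ((p.1 : ℕ) : ℚ)))

/-- The self-dual irreducible `A_r`-module of highest weight `d` is *symplectic*
(it carries an invariant alternating form); by Steinberg's criterion this happens
exactly when `⟨d, 2ρ^∨⟩ = ∑ d_k · k(r+1-k)` is odd. -/
def IsSympWt (r : ℕ) (d : Fin r → ℕ) : Prop :=
  Odd (∑ i : Fin r, d i * ((i : ℕ) + 1) * (r - (i : ℕ)))

/-! ### The classical types `B`, `C`, `D` -/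

/-- Convenient access to the `k`-th (0-indexed) coordinate. -/
def cval {n : ℕ} (c : Fin n → ℕ) (k : ℕ) : ℚ := if h : k < n then (c ⟨k, h⟩ : ℚ) else 0

/-- `ε`-coordinates of the dominant weight of the classical group of type `t` and rank `n`
with coordinates `c` in the basis of fundamental weights (Bourbaki numbering). -/
def epsWt (t : CType) (n : ℕ) (c : Fin n → ℕ) : Fin n → ℚ := fun i =>
  (∑ k ∈ Finset.univ.filter (fun k : Fin n => (i : ℕ) ≤ (k : ℕ)), (c k : ℚ)) -
    (match t with
      | .C => 0
      | .B => cval c (n - 1) / 2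
      | .D => (cval c (n - 2) + cval c (n - 1)) / 2)

/-- The half-sum of the positive roots in `ε`-coordinates. -/
def rhoY (t : CType) (n : ℕ) : Fin n → ℚ := fun i =>
  match t with
  | .C => (n : ℚ) - (i : ℕ)
  | .B => (n : ℚ) - (i : ℕ) - 1 / 2
  | .D => (n : ℚ) - 1 - (i : ℕ)

/-- The Weyl alternating sum for the classical group of type `t` and rank `n`:
the Weyl group consists of the signed permutations of the coordinates,
with evenly many sign changes in type `D`. -/
def altY (t : CType) (n : ℕ) (v : Fin n → ℚ) : CharRing n :=
  ∑ σ : Equiv.Perm (Fin n), ∑ s : Fin n → Bool,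
    if t = CType.D ∧ ¬ Even (Finset.univ.filter (fun i => s i = true)).card then 0
    else (((Equiv.Perm.sign σ : ℤˣ) : ℤ) *
          (-1) ^ (Finset.univ.filter (fun i => s i = true)).card) •
      mono (fun i => (if s i then -1 else 1) * v (σ i))

/-- `IsCharY t n c f` : `f` is the formal character of the irreducible module of highest
weight `c` for the classical group of type `t` and rank `n` (Weyl character formula). -/
def IsCharY (t : CType) (n : ℕ) (c : Fin n → ℕ) (f : CharRing n) : Prop :=
  altY t n (rhoY t n) * f = altY t n (epsWt t n c + rhoY t n)

/-! ### The embedding `X = A_r < Y` via `δ`, and restriction of characters -/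

/-- `WtSys t n r δ w` : `w` lists "half" of the weights of the natural module
`W = V_X(δ)` of the classical group `Y` of type `t` and rank `n`, for `X = A_r`:
the weights of `W` (with multiplicity) are exactly the `± w i`, together with one
extra zero weight in type `B`.  Such a `w` records a maximal torus embedding
`T_X → T_Y` realising the irreducible embedding `X < Y = SO(W)` or `Sp(W)` given
by the representation of highest weight `δ`. -/
def WtSys (t : CType) (n r : ℕ) (δ : Fin r → ℕ)
    (w : Fin n → (Fin (r + 1) → ℚ)) : Prop :=
  ((∑ i : Fin n, (mono (w i) + mono (-(w i)))) +
      (if t = CType.B then mono (0 : Fin (r + 1) → ℚ) else 0)) * altA r (rhoA r)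
    = altA r (slWt r δ + rhoA r)

/-- Restriction of characters from `Y` to `X = A_r` along the torus embedding
recorded by `w`. -/
def resChar {n r : ℕ} (w : Fin n → (Fin (r + 1) → ℚ)) (F : CharRing n) :
    CharRing (r + 1) :=
  AddMonoidAlgebra.mapDomain (fun v : Fin n → ℚ => ∑ i : Fin n, v i • w i) F

/-- `IsMFRes t n r δ lam` : in the embedding `X = A_r < Y` (the classical group of type
`t` and rank `n`) given by the irreducible representation of highest weight `δ`, the
restriction to `X` of the irreducible `Y`-module of highest weight `lam` is
multiplicity-free: its character is a sum of *distinct* irreducible characters of `X`. -/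
def IsMFRes (t : CType) (n r : ℕ) (δ : Fin r → ℕ) (lam : Fin n → ℕ) : Prop :=
  ∀ w, WtSys t n r δ w → ∀ f, IsCharY t n lam f →
    ∃ c : (Fin r → ℕ) →₀ ℕ, Decomp r (resChar w f) c ∧ ∀ μ, c μ ≤ 1

/-- The operation `e^v ↦ e^{k·v}` on characters (Adams operation on the torus),
used to express symmetric and exterior powers of characters. -/
def pw {m : ℕ} (k : ℕ) (F : CharRing m) : CharRing m :=
  AddMonoidAlgebra.mapDomain (fun v : Fin m → ℚ => (k : ℚ) • v) F

/-- The irreducible `A_r`-module of highest weight `d` carries a nonzero invariant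
*symmetric* bilinear form, i.e. the trivial module occurs in its symmetric square
(whose character `S` satisfies `2S = f² + f^{[2]}`). -/
def HasSymForm (r : ℕ) (d : Fin r → ℕ) : Prop :=
  ∀ f, IsCharA r d f →
    ∃ c : (Fin r → ℕ) →₀ ℕ,
      (f * f + pw 2 f) * altA r (rhoA r)
          = c.sum (fun μ k => ((2 * k : ℕ) : ℤ) • altA r (slWt r μ + rhoA r)) ∧ 1 ≤ c 0

/-- The irreducible `A_r`-module of highest weight `d` carries a nonzero invariant
*alternating* bilinear form, i.e. the trivial module occurs in its exterior square
(whose character `Λ` satisfies `2Λ = f² - f^{[2]}`). -/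
def HasAltForm (r : ℕ) (d : Fin r → ℕ) : Prop :=
  ∀ f, IsCharA r d f →
    ∃ c : (Fin r → ℕ) →₀ ℕ,
      (f * f - pw 2 f) * altA r (rhoA r)
          = c.sum (fun μ k => ((2 * k : ℕ) : ℤ) • altA r (slWt r μ + rhoA r)) ∧ 1 ≤ c 0

end MFPaper

open MFPaper

/-!
The weights of `⋀⁴ K⁸` are the roots of `E₇` outside its subsystem `A₇`. Hence the difference of
the restrictions to `A₇` of the two half-spin characters of `D₃₅`, a product of
`e^{β/2} - e^{-β/2}` over half of these roots, is up to sign the quotient of the Weyl denominators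
of `E₇` and `A₇`. The denominator formula expands the `E₇` denominator over the Weyl orbit of its
Weyl vector `ρ`, which the index `|W(E₇) : S₈| = 72` cuts into `72` alternating sums of type `A₇`:
`36` of them, with sign `+`, belong to the coset of `ρ` modulo the root lattice of `A₇`, and the
other `36`, their negatives, to the opposite coset. Since these are also the cosets in which the
two half-spin modules have their weights, up to the shift by the Weyl vector of `A₇`, each of them
restricts to a sum of `36` irreducible characters, and the two restrictions are dual.
-/

namespace MFPaper

open Finset
open scoped Matrix

/-! ### Formal exponentials -/

section CharRing

variable {ι : Type*} {k l : ℕ}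

theorem mono_mul_mono (u v : Fin k → ℚ) : mono u * mono v = mono (u + v) := by
  simp [mono, AddMonoidAlgebra.single_mul_single]

theorem mono_zero : mono (0 : Fin k → ℚ) = 1 := rfl

theorem mono_sum (s : Finset ι) (x : ι → Fin k → ℚ) :
    mono (∑ i ∈ s, x i) = ∏ i ∈ s, mono (x i) := by
  classical
  induction s using Finset.induction_on with
  | empty => exact mono_zero
  | insert i s hi ih => rw [sum_insert hi, prod_insert hi, ← mono_mul_mono, ih]

theorem mono_nsmul (n : ℕ) (u : Fin k → ℚ) : mono (n • u) = mono u ^ n := by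
  simpa using mono_sum (range n) fun _ => u

theorem coeff_mono (u x : Fin k → ℚ) : (mono u).coeff x = if u = x then 1 else 0 := by
  simp [mono, Finsupp.single_apply]

theorem coeff_sum_smul_mono (s : Finset ι) (c : ι → ℤ) (X : ι → Fin k → ℚ) (x : Fin k → ℚ) :
    (∑ i ∈ s, c i • mono (X i)).coeff x = ∑ i ∈ s, if X i = x then c i else 0 := by
  simp [AddMonoidAlgebra.coeff_sum, coeff_mono, -zsmul_eq_mul]

theorem coeff_sum_smul_mono_of_injOn {s : Finset ι} {X : ι → Fin k → ℚ} (hX : Set.InjOn X s)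
    (c : ι → ℤ) {i : ι} (hi : i ∈ s) : (∑ j ∈ s, c j • mono (X j)).coeff (X i) = c i := by
  rw [coeff_sum_smul_mono, sum_eq_single_of_mem i hi fun j hj hji => ?_, if_pos rfl]
  exact if_neg fun h => hji (hX hj hi h)

theorem exists_of_coeff_sum_smul_mono_ne_zero {s : Finset ι} {c : ι → ℤ} {X : ι → Fin k → ℚ}
    {x : Fin k → ℚ} (h : (∑ i ∈ s, c i • mono (X i)).coeff x ≠ 0) : ∃ i ∈ s, X i = x := by
  rw [coeff_sum_smul_mono] at h
  obtain ⟨i, hi, hix⟩ := exists_ne_zero_of_sum_ne_zero h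
  exact ⟨i, hi, by by_contra hne; exact hix (if_neg hne)⟩

theorem eq_zero_of_eq_neg {F : CharRing k} (h : F = -F) : F = 0 := by
  ext x
  have hx := congrArg (fun G : CharRing k => G.coeff x) h
  simp only [AddMonoidAlgebra.coeff_neg, Finsupp.neg_apply] at hx
  simpa using self_eq_neg.1 hx

/-- The map `e^v ↦ e^{s v}` of character rings induced by a map `s` of weight spaces. -/
def charMap (s : (Fin k → ℚ) →+ (Fin l → ℚ)) : CharRing k →+* CharRing l :=
  AddMonoidAlgebra.mapDomainRingHom ℤ s

theorem charMap_mono (s : (Fin k → ℚ) →+ (Fin l → ℚ)) (u : Fin k → ℚ) :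
    charMap s (mono u) = mono (s u) := by
  simp [charMap, mono]

theorem coeff_charMap {s : (Fin k → ℚ) →+ (Fin l → ℚ)} (hs : Function.Injective s)
    (F : CharRing k) (x : Fin k → ℚ) : (charMap s F).coeff (s x) = F.coeff x := by
  simp only [charMap, AddMonoidAlgebra.mapDomainRingHom_apply, AddMonoidAlgebra.coeff_mapDomain]
  exact Finsupp.mapDomain_apply hs _ _

end CharRing

/-! ### Alternating sums of type `A` -/

section TypeA

variable {r : ℕ}

theorem altA_comp_perm (x : Fin (r + 1) → ℚ) (τ : Equiv.Perm (Fin (r + 1))) :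
    altA r (x ∘ τ) = (Equiv.Perm.sign τ : ℤ) • altA r x := by
  rw [altA, altA, smul_sum, ← Equiv.sum_comp (Equiv.mulLeft τ) fun σ =>
    (Equiv.Perm.sign τ : ℤ) • (Equiv.Perm.sign σ : ℤ) • mono fun i => x (σ i)]
  refine sum_congr rfl fun σ _ => ?_
  rw [Equiv.coe_mulLeft, Equiv.Perm.sign_mul, smul_smul, ← Units.val_mul, ← mul_assoc,
    Int.units_mul_self, one_mul]
  rfl

theorem comp_swap_eq_self {n : ℕ} {x : Fin n → ℚ} {i j : Fin n} (h : x i = x j) :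
    x ∘ Equiv.swap i j = x := by
  funext k
  simp only [Function.comp, Equiv.swap_apply_def]
  split_ifs <;> simp_all

theorem altA_eq_zero_of_eq {x : Fin (r + 1) → ℚ} {i j : Fin (r + 1)} (hij : i ≠ j)
    (h : x i = x j) : altA r x = 0 := by
  apply eq_zero_of_eq_neg
  have hswap := altA_comp_perm x (Equiv.swap i j)
  rwa [comp_swap_eq_self h, Equiv.Perm.sign_swap hij, Units.val_neg, Units.val_one,
    neg_one_smul] at hswap

theorem rhoA_injective : Function.Injective (rhoA r) := fun i j h => by
  simpa [rhoA, Fin.ext_iff] using h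

theorem altA_rhoA_ne_zero : altA r (rhoA r) ≠ 0 := by
  intro h
  have hinj : Set.InjOn (fun (σ : Equiv.Perm (Fin (r + 1))) i => rhoA r (σ i))
      (univ : Finset (Equiv.Perm (Fin (r + 1)))) := fun σ _ τ _ hστ =>
    Equiv.ext fun i => rhoA_injective (congrFun hστ i)
  have hone := coeff_sum_smul_mono_of_injOn hinj (fun σ => (Equiv.Perm.sign σ : ℤ)) (mem_univ 1)
  rw [← altA, h] at hone
  simp at hone

theorem sum_mono_mul_altA {s : Finset (Fin (r + 1) → ℚ)}
    (hs : ∀ σ : Equiv.Perm (Fin (r + 1)), ∀ x ∈ s, x ∘ σ ∈ s) (v : Fin (r + 1) → ℚ) :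
    (∑ x ∈ s, mono x) * altA r v = ∑ x ∈ s, altA r (x + v) := by
  simp only [altA]
  rw [mul_sum, sum_comm]
  refine sum_congr rfl fun σ _ => ?_
  rw [sum_mul]
  refine sum_bij' (fun x _ => x ∘ σ.symm) (fun x _ => x ∘ σ) (fun x hx => hs _ x hx)
    (fun x hx => hs _ x hx) (fun x _ => by ext; simp) (fun x _ => by ext; simp) fun x _ => ?_
  rw [mul_smul_comm, mono_mul_mono]
  congr 2
  ext i
  simp

/-- The weight of the basis vector `⋀_{i ∈ S} e_i` of an exterior power of the natural module,
in traceless coordinates. -/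
def exteriorWeight (S : Finset (Fin (r + 1))) : Fin (r + 1) → ℚ := fun i =>
  (if i ∈ S then 1 else 0) - (#S : ℚ) / (r + 1)

theorem exteriorWeight_comp_perm (S : Finset (Fin (r + 1))) (σ : Equiv.Perm (Fin (r + 1))) :
    exteriorWeight S ∘ σ = exteriorWeight (S.map σ.symm.toEmbedding) := by
  ext i
  simp [exteriorWeight, mem_map_equiv]

/-- The weights of the `k`-th exterior power of the natural module of `A_r`. -/
def exteriorWeights (r k : ℕ) : Finset (Fin (r + 1) → ℚ) :=
  (powersetCard k univ).image exteriorWeight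

theorem mem_exteriorWeights {k : ℕ} {x : Fin (r + 1) → ℚ} :
    x ∈ exteriorWeights r k ↔ ∃ S : Finset (Fin (r + 1)), #S = k ∧ exteriorWeight S = x := by
  simp [exteriorWeights]

theorem exteriorWeights_comp_perm {k : ℕ} (σ : Equiv.Perm (Fin (r + 1))) {x : Fin (r + 1) → ℚ}
    (hx : x ∈ exteriorWeights r k) : x ∘ σ ∈ exteriorWeights r k := by
  obtain ⟨S, hS, rfl⟩ := mem_exteriorWeights.1 hx
  exact mem_exteriorWeights.2
    ⟨S.map σ.symm.toEmbedding, by rw [card_map, hS], (exteriorWeight_comp_perm S σ).symm⟩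

theorem slWt_fundamental (k : Fin r) : slWt r (e r (k + 1)) = exteriorWeight (Iic k.castSucc) := by
  have he : ∀ j, e r (k + 1) j = if j = k then 1 else 0 := by simp [e, Fin.ext_iff]
  ext i
  have hlift : partLift r (e r (k + 1)) i = if i ∈ Iic k.castSucc then 1 else 0 := by
    simp [partLift, he, Fin.le_def]
  simp [slWt, hlift, exteriorWeight, he]

theorem eq_Iic_of_succ_mem_imp {S : Finset (Fin (r + 1))} {k : Fin r} (hcard : #S = k + 1)
    (hS : ∀ i : Fin r, i.succ ∈ S → i.castSucc ∈ S) : S = Iic k.castSucc := by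
  have hlower : ∀ j ∈ S, Iic j ⊆ S := by
    intro j
    induction j using Fin.induction with
    | zero => intro h i hi; rwa [Fin.le_zero_iff.1 (mem_Iic.1 hi)]
    | succ j ih =>
      intro h i hi
      rcases (mem_Iic.1 hi).eq_or_lt with rfl | hlt
      · exact h
      · exact ih (hS j h) (mem_Iic.2 (Fin.le_castSucc_iff.2 hlt))
  refine eq_of_subset_of_card_le (fun j hj => ?_) (by simp [hcard])
  have := card_le_card (hlower j hj)
  rw [Fin.card_Iic] at this
  rw [mem_Iic, Fin.le_def, Fin.val_castSucc]
  omega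

theorem sum_exteriorWeights_mul_altA (k : Fin r) :
    (∑ x ∈ exteriorWeights r (k + 1), mono x) * altA r (rhoA r) =
      altA r (slWt r (e r (k + 1)) + rhoA r) := by
  rw [sum_mono_mul_altA fun σ x => exteriorWeights_comp_perm σ]
  refine sum_eq_single_of_mem _
    (mem_exteriorWeights.2 ⟨Iic k.castSucc, by simp, (slWt_fundamental k).symm⟩) fun x hx hne => ?_
  obtain ⟨S, hS, rfl⟩ := mem_exteriorWeights.1 hx
  obtain ⟨i, hi, hi'⟩ : ∃ i : Fin r, i.succ ∈ S ∧ i.castSucc ∉ S := by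
    by_contra! h
    exact hne (by rw [slWt_fundamental, eq_Iic_of_succ_mem_imp hS h])
  refine altA_eq_zero_of_eq (Fin.castSucc_lt_succ (i := i)).ne ?_
  simp [exteriorWeight, rhoA, hi, hi']
  ring

theorem altA_rhoA_eq_prod : altA r (rhoA r) =
    ∏ i : Fin (r + 1), ∏ j ∈ Ioi i, (mono (Pi.single i 1) - mono (Pi.single j 1)) := by
  have hdet : altA r (rhoA r) = (Matrix.projVandermonde (fun _ => (1 : CharRing (r + 1)))
      fun i => mono (Pi.single i 1)).det := by
    rw [Matrix.det_apply']
    simp only [Matrix.projVandermonde_apply, one_pow, one_mul, ← mono_nsmul, ← mono_sum]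
    rw [altA, ← Equiv.sum_comp (Equiv.inv _)]
    refine sum_congr rfl fun σ _ => ?_
    rw [Equiv.inv_apply, Equiv.Perm.sign_inv, zsmul_eq_mul]
    congr 2
    ext i
    rw [Finset.sum_apply, sum_eq_single_of_mem (σ⁻¹ i) (mem_univ _) fun j _ hj => ?_]
    · simp [rhoA, Fin.val_rev, Nat.cast_sub (Fin.is_le _)]
    · have : i ≠ σ j := fun h => hj (by simp [h])
      simp [Pi.single_eq_of_ne this]
  simp only [hdet, Matrix.det_projVandermonde, one_mul]

end TypeA

/-! ### The Weyl denominator formula -/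

section WeylDenominator

variable {ι : Type*} {k l : ℕ}

/-- The reflection in the hyperplane orthogonal to `a`, for a root `a` normalised by
`a ⬝ᵥ a = 2`. -/
def reflection (a : Fin k → ℚ) : (Fin k → ℚ) →+ (Fin k → ℚ) where
  toFun x := x - (x ⬝ᵥ a) • a
  map_zero' := by simp
  map_add' x y := by rw [add_dotProduct]; module

theorem reflection_apply (a x : Fin k → ℚ) : reflection a x = x - (x ⬝ᵥ a) • a := rfl

theorem reflection_involutive {a : Fin k → ℚ} (ha : a ⬝ᵥ a = 2) :
    Function.Involutive (reflection a) := fun x => by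
  simp only [reflection_apply, sub_dotProduct, smul_dotProduct, ha, smul_eq_mul]
  module

theorem reflection_self {a : Fin k → ℚ} (ha : a ⬝ᵥ a = 2) : reflection a a = -a := by
  rw [reflection_apply, ha]
  module

theorem reflection_dotProduct (a x y : Fin k → ℚ) :
    reflection a x ⬝ᵥ y = x ⬝ᵥ reflection a y := by
  simp only [reflection_apply, sub_dotProduct, dotProduct_sub, smul_dotProduct, dotProduct_smul,
    smul_eq_mul, dotProduct_comm a y]
  ring

theorem dotProduct_lt_of_dot_self_eq {x y : Fin k → ℚ} (h : x ⬝ᵥ x = y ⬝ᵥ y) (hne : x ≠ y) :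
    x ⬝ᵥ y < y ⬝ᵥ y := by
  have hpos : 0 < (x - y) ⬝ᵥ (x - y) := by
    simpa using Matrix.dotProduct_self_star_pos_iff.2 (sub_ne_zero.2 hne)
  simp only [sub_dotProduct, dotProduct_sub, dotProduct_comm y x] at hpos
  linarith

/-- The factor `e^{β/2} - e^{-β/2}` of the Weyl denominator. -/
def rootFactor (β : Fin k → ℚ) : CharRing k := mono ((1 / 2 : ℚ) • β) - mono (-((1 / 2 : ℚ) • β))

theorem rootFactor_neg (β : Fin k → ℚ) : rootFactor (-β) = -rootFactor β := by
  simp [rootFactor]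

theorem charMap_rootFactor (s : (Fin k → ℚ) →+ (Fin l → ℚ)) (β : Fin k → ℚ) :
    charMap s (rootFactor β) = rootFactor (s β) := by
  simp only [rootFactor, map_sub, charMap_mono, map_neg, map_rat_smul]

theorem prod_rootFactor (s : Finset ι) (β : ι → Fin k → ℚ) :
    ∏ i ∈ s, rootFactor (β i) =
      ∑ t ∈ s.powerset, (-1 : ℤ) ^ #t • mono ((1 / 2 : ℚ) • ∑ i ∈ s, β i - ∑ i ∈ t, β i) := by
  classical
  simp only [rootFactor]
  rw [prod_sub]
  refine sum_congr rfl fun t ht => ?_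
  rw [← mono_sum, ← mono_sum, mul_assoc, mono_mul_mono, zsmul_eq_mul]
  push_cast
  congr 2
  rw [← sum_sdiff (mem_powerset.1 ht), sum_neg_distrib, ← smul_sum, ← smul_sum]
  module

/-- The half-sum of a set of positive roots. -/
def weylVector (Φ : Finset (Fin k → ℚ)) : Fin k → ℚ := (1 / 2 : ℚ) • ∑ β ∈ Φ, β

/-- The Weyl denominator `∏ (e^{β/2} - e^{-β/2})` over a set of positive roots. -/
def weylDenominator (Φ : Finset (Fin k → ℚ)) : CharRing k := ∏ β ∈ Φ, rootFactor β

/-- The sign of the chamber of `x`, i.e. `sgn(w)` if `w x` is strictly dominant, and `0` if `x` is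
singular. -/
def weylSign (Φ : Finset (Fin k → ℚ)) (x : Fin k → ℚ) : ℤ := SignType.sign (∏ β ∈ Φ, x ⬝ᵥ β)

theorem weylDenominator_eq_sum_powerset (Φ : Finset (Fin k → ℚ)) :
    weylDenominator Φ = ∑ T ∈ Φ.powerset, (-1 : ℤ) ^ #T • mono (weylVector Φ - ∑ β ∈ T, β) :=
  prod_rootFactor Φ id

/-- The positive roots `Φ` and simple roots `α` of a simply laced root system, all roots being of
squared length `2`. The last two fields replace the axioms on simple roots by the two
consequences on the half-sum of positive roots that the denominator formula rests on. -/
structure IsPositiveSystem [Fintype ι] (Φ : Finset (Fin k → ℚ)) (α : ι → Fin k → ℚ) : Prop where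
  simple_mem : ∀ i, α i ∈ Φ
  simple_dot_self : ∀ i, α i ⬝ᵥ α i = 2
  reflection_mem : ∀ i, ∀ β ∈ Φ, β ≠ α i → reflection (α i) β ∈ Φ
  dot_simple_int : ∀ i, ∀ β ∈ Φ, ∃ m : ℤ, β ⬝ᵥ α i = m
  dot_weylVector_pos : ∀ β ∈ Φ, 0 < β ⬝ᵥ weylVector Φ
  weylVector_nonneg_combination : ∃ c : ι → ℚ, (∀ i, 0 ≤ c i) ∧ weylVector Φ = ∑ i, c i • α i

namespace IsPositiveSystem

variable [Fintype ι] {Φ : Finset (Fin k → ℚ)} {α : ι → Fin k → ℚ}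

theorem reflection_mem_erase (hΦ : IsPositiveSystem Φ α) (i : ι) {β : Fin k → ℚ}
    (hβ : β ∈ Φ.erase (α i)) : reflection (α i) β ∈ Φ.erase (α i) := by
  obtain ⟨hne, hmem⟩ := mem_erase.1 hβ
  refine mem_erase.2 ⟨fun h => ?_, hΦ.reflection_mem i β hmem hne⟩
  have hβneg : β = -α i := by
    rw [← reflection_self (hΦ.simple_dot_self i), ← reflection_involutive (hΦ.simple_dot_self i) β,
      h]
  have hpos := hΦ.dot_weylVector_pos β hmem
  have hpos' := hΦ.dot_weylVector_pos _ (hΦ.simple_mem i)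
  rw [hβneg, neg_dotProduct] at hpos
  linarith

theorem prod_erase_reflection {M : Type*} [CommMonoid M] (hΦ : IsPositiveSystem Φ α) (i : ι)
    (f : (Fin k → ℚ) → M) :
    ∏ β ∈ Φ.erase (α i), f (reflection (α i) β) = ∏ β ∈ Φ.erase (α i), f β :=
  prod_nbij' (reflection (α i)) (reflection (α i)) (fun _ => hΦ.reflection_mem_erase i)
    (fun _ => hΦ.reflection_mem_erase i)
    (fun β _ => reflection_involutive (hΦ.simple_dot_self i) β)
    (fun β _ => reflection_involutive (hΦ.simple_dot_self i) β) fun _ _ => rfl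

theorem reflection_weylVector (hΦ : IsPositiveSystem Φ α) (i : ι) :
    reflection (α i) (weylVector Φ) = weylVector Φ - α i := by
  have hsum : ∑ β ∈ Φ.erase (α i), reflection (α i) β = ∑ β ∈ Φ.erase (α i), β :=
    hΦ.prod_erase_reflection (M := Multiplicative (Fin k → ℚ)) i Multiplicative.ofAdd
  rw [weylVector, map_rat_smul, map_sum, ← add_sum_erase _ _ (hΦ.simple_mem i),
    ← add_sum_erase Φ (fun β => β) (hΦ.simple_mem i), hsum, reflection_self (hΦ.simple_dot_self i)]
  module

theorem weylVector_dot_simple (hΦ : IsPositiveSystem Φ α) (i : ι) : weylVector Φ ⬝ᵥ α i = 1 := by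
  have h := congrArg (· ⬝ᵥ α i) (hΦ.reflection_weylVector i)
  simp only [reflection_apply, sub_dotProduct, smul_dotProduct, hΦ.simple_dot_self i,
    smul_eq_mul] at h
  linarith

theorem charMap_weylDenominator (hΦ : IsPositiveSystem Φ α) (i : ι) :
    charMap (reflection (α i)) (weylDenominator Φ) = -weylDenominator Φ := by
  rw [weylDenominator, map_prod, ← mul_prod_erase _ _ (hΦ.simple_mem i),
    ← mul_prod_erase Φ _ (hΦ.simple_mem i)]
  simp only [charMap_rootFactor, reflection_self (hΦ.simple_dot_self i), rootFactor_neg]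
  rw [hΦ.prod_erase_reflection i rootFactor, neg_mul]

theorem weylSign_reflection (hΦ : IsPositiveSystem Φ α) (i : ι) (x : Fin k → ℚ) :
    weylSign Φ (reflection (α i) x) = -weylSign Φ x := by
  simp only [weylSign, reflection_dotProduct]
  rw [← mul_prod_erase _ _ (hΦ.simple_mem i), ← mul_prod_erase Φ _ (hΦ.simple_mem i),
    hΦ.prod_erase_reflection i (x ⬝ᵥ ·), reflection_self (hΦ.simple_dot_self i), dotProduct_neg,
    neg_mul, Left.sign_neg]
  simp

theorem weylSign_weylVector (hΦ : IsPositiveSystem Φ α) : weylSign Φ (weylVector Φ) = 1 := by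
  rw [weylSign, sign_pos (prod_pos fun β hβ => ?_), SignType.coe_one]
  rw [dotProduct_comm]
  exact hΦ.dot_weylVector_pos β hβ

theorem sum_dot_weylVector_pos (hΦ : IsPositiveSystem Φ α) {T : Finset (Fin k → ℚ)} (hT : T ⊆ Φ)
    (hne : T.Nonempty) : 0 < (∑ β ∈ T, β) ⬝ᵥ weylVector Φ := by
  rw [sum_dotProduct]
  exact sum_pos (fun β hβ => hΦ.dot_weylVector_pos β (hT hβ)) hne

theorem coeff_weylDenominator_weylVector (hΦ : IsPositiveSystem Φ α) :
    (weylDenominator Φ).coeff (weylVector Φ) = 1 := by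
  rw [weylDenominator_eq_sum_powerset, coeff_sum_smul_mono,
    sum_eq_single_of_mem ∅ (empty_mem_powerset Φ) fun T hT hne => if_neg fun h => ?_]
  · simp
  · have hpos := hΦ.sum_dot_weylVector_pos (mem_powerset.1 hT) (nonempty_iff_ne_empty.2 hne)
    rw [sub_eq_self.1 h, zero_dotProduct] at hpos
    exact hpos.false

theorem dot_lt_of_coeff_weylDenominator_ne_zero (hΦ : IsPositiveSystem Φ α) {x : Fin k → ℚ}
    (hx : (weylDenominator Φ).coeff x ≠ 0) (hne : x ≠ weylVector Φ) :
    x ⬝ᵥ weylVector Φ < weylVector Φ ⬝ᵥ weylVector Φ := by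
  rw [weylDenominator_eq_sum_powerset] at hx
  obtain ⟨T, hT, rfl⟩ := exists_of_coeff_sum_smul_mono_ne_zero hx
  have hTne : T.Nonempty := nonempty_iff_ne_empty.2 fun h => hne (by simp [h])
  have hpos := hΦ.sum_dot_weylVector_pos (mem_powerset.1 hT) hTne
  rw [sub_dotProduct]
  linarith

theorem exists_int_of_coeff_weylDenominator_ne_zero (hΦ : IsPositiveSystem Φ α) {x : Fin k → ℚ}
    (hx : (weylDenominator Φ).coeff x ≠ 0) (i : ι) : ∃ m : ℤ, x ⬝ᵥ α i = m := by
  rw [weylDenominator_eq_sum_powerset] at hx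
  obtain ⟨T, hT, rfl⟩ := exists_of_coeff_sum_smul_mono_ne_zero hx
  choose m hm using hΦ.dot_simple_int i
  refine ⟨1 - ∑ β ∈ T.attach, m β.1 (mem_powerset.1 hT β.2), ?_⟩
  rw [sub_dotProduct, hΦ.weylVector_dot_simple, sum_dotProduct, ← sum_attach]
  push_cast
  congr 1
  exact sum_congr rfl fun β _ => hm _ _

-- A support point `x` maximising `x ⬝ᵥ ρ` is regular dominant, so `x - ρ` is dominant and
-- pairs nonnegatively with `ρ`.
theorem eq_zero_of_charMap_reflection_eq_neg (hΦ : IsPositiveSystem Φ α) {F : CharRing k}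
    (hanti : ∀ i, charMap (reflection (α i)) F = -F)
    (hint : ∀ x, F.coeff x ≠ 0 → ∀ i, ∃ m : ℤ, x ⬝ᵥ α i = m)
    (hlt : ∀ x, F.coeff x ≠ 0 → x ⬝ᵥ weylVector Φ < weylVector Φ ⬝ᵥ weylVector Φ) : F = 0 := by
  by_contra hF
  have hsupp : F.coeff.support.Nonempty := by simpa using hF
  obtain ⟨x, hx, hmax⟩ := exists_max_image F.coeff.support (· ⬝ᵥ weylVector Φ) hsupp
  rw [Finsupp.mem_support_iff] at hx
  have hcoeff : ∀ i, F.coeff (reflection (α i) x) = -F.coeff x := fun i => by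
    have h := coeff_charMap (reflection_involutive (hΦ.simple_dot_self i)).injective F x
    rw [hanti i, AddMonoidAlgebra.coeff_neg, Finsupp.neg_apply] at h
    linarith
  have hdom : ∀ i, 1 ≤ x ⬝ᵥ α i := fun i => by
    have hnonneg : 0 ≤ x ⬝ᵥ α i := by
      have h := hmax (reflection (α i) x) (by simpa [hcoeff] using hx)
      rw [reflection_dotProduct, hΦ.reflection_weylVector, dotProduct_sub] at h
      linarith
    have hne : x ⬝ᵥ α i ≠ 0 := fun h => by
      have hfix := hcoeff i
      rw [reflection_apply, h, zero_smul, sub_zero] at hfix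
      exact hx (self_eq_neg.1 hfix)
    obtain ⟨m, hm⟩ := hint x hx i
    rw [hm] at hnonneg hne ⊢
    have hm0 : 0 < m := by exact_mod_cast hnonneg.lt_of_ne' hne
    exact_mod_cast hm0
  obtain ⟨c, hc, hρ⟩ := hΦ.weylVector_nonneg_combination
  have hge : 0 ≤ (x - weylVector Φ) ⬝ᵥ weylVector Φ := by
    nth_rewrite 2 [hρ]
    rw [dotProduct_sum]
    refine sum_nonneg fun i _ => ?_
    rw [dotProduct_smul, sub_dotProduct, hΦ.weylVector_dot_simple]
    exact mul_nonneg (hc i) (sub_nonneg.2 (hdom i))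
  rw [sub_dotProduct] at hge
  linarith [hlt x hx]

theorem charMap_sum_weylSign (hΦ : IsPositiveSystem Φ α) (i : ι) {O : Finset (Fin k → ℚ)}
    (hO : ∀ x ∈ O, reflection (α i) x ∈ O) :
    charMap (reflection (α i)) (∑ x ∈ O, weylSign Φ x • mono x) =
      -∑ x ∈ O, weylSign Φ x • mono x := by
  have hinv := reflection_involutive (hΦ.simple_dot_self i)
  rw [map_sum, ← sum_neg_distrib]
  refine sum_nbij' (reflection (α i)) (reflection (α i)) hO hO (fun x _ => hinv x)
    (fun x _ => hinv x) fun x _ => ?_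
  rw [map_zsmul, charMap_mono, hΦ.weylSign_reflection, neg_smul, neg_neg]

theorem weylDenominator_eq_sum (hΦ : IsPositiveSystem Φ α) {O : Finset (Fin k → ℚ)}
    (hρ : weylVector Φ ∈ O) (hO : ∀ i, ∀ x ∈ O, reflection (α i) x ∈ O)
    (hnorm : ∀ x ∈ O, x ⬝ᵥ x = weylVector Φ ⬝ᵥ weylVector Φ)
    (hint : ∀ x ∈ O, ∀ i, ∃ m : ℤ, x ⬝ᵥ α i = m) :
    weylDenominator Φ = ∑ x ∈ O, weylSign Φ x • mono x := by
  have hsupp : ∀ x, (weylDenominator Φ - ∑ x ∈ O, weylSign Φ x • mono x).coeff x ≠ 0 →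
      (weylDenominator Φ).coeff x ≠ 0 ∨ x ∈ O := fun x hx => by
    by_contra! h
    refine hx ?_
    rw [AddMonoidAlgebra.coeff_sub, Finsupp.sub_apply, h.1, zero_sub, neg_eq_zero]
    by_contra hne
    obtain ⟨y, hy, rfl⟩ := exists_of_coeff_sum_smul_mono_ne_zero hne
    exact h.2 hy
  refine sub_eq_zero.1 (hΦ.eq_zero_of_charMap_reflection_eq_neg (fun i => ?_) (fun x hx i => ?_)
    fun x hx => ?_)
  · rw [map_sub, hΦ.charMap_weylDenominator, hΦ.charMap_sum_weylSign i (hO i)]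
    abel
  · exact (hsupp x hx).elim (hΦ.exists_int_of_coeff_weylDenominator_ne_zero · i) (hint x · i)
  · have hne : x ≠ weylVector Φ := by
      rintro rfl
      have h := coeff_sum_smul_mono_of_injOn (X := id) (Set.injOn_id _) (weylSign Φ) hρ
      rw [hΦ.weylSign_weylVector] at h
      apply hx
      rw [AddMonoidAlgebra.coeff_sub, Finsupp.sub_apply, hΦ.coeff_weylDenominator_weylVector]
      exact sub_eq_zero.2 h.symm
    exact (hsupp x hx).elim (hΦ.dot_lt_of_coeff_weylDenominator_ne_zero · hne)
      fun hxO => dotProduct_lt_of_dot_self_eq (hnorm x hxO) hne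

end IsPositiveSystem

end WeylDenominator

/-! ### The denominator of type `A` -/

section TypeA

variable {r : ℕ}

theorem slWt_castSucc_sub_succ (d : Fin r → ℕ) (i : Fin r) :
    slWt r d i.castSucc - slWt r d i.succ = d i := by
  have hfilter : univ.filter (fun j : Fin r => (i.castSucc : ℕ) ≤ j) =
      insert i (univ.filter fun j : Fin r => (i.succ : ℕ) ≤ j) := by
    ext j
    simp [Fin.ext_iff]
    omega
  rw [slWt, slWt, partLift, partLift, hfilter, sum_insert (by simp)]
  ring

theorem slWt_injective : Function.Injective (slWt r) := fun d d' h => by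
  ext i
  have hi := slWt_castSucc_sub_succ d i
  rw [h, slWt_castSucc_sub_succ] at hi
  exact_mod_cast hi.symm

theorem strictAnti_slWt_add_one (μ : Fin r → ℕ) : StrictAnti (slWt r (μ + 1)) :=
  Fin.strictAnti_iff_succ_lt.2 fun i => sub_pos.1 (by
    rw [slWt_castSucc_sub_succ]
    exact Nat.cast_pos.2 (Nat.succ_pos _))

theorem sum_succ_eq (r : ℕ) : ∑ j : Fin r, ((j : ℚ) + 1) = r * (r + 1) / 2 := by
  induction r with
  | zero => simp
  | succ r ih =>
    rw [Fin.sum_univ_castSucc]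
    simp only [Fin.val_castSucc, ih, Fin.val_last]
    push_cast
    ring

theorem slWt_add_rhoA (μ : Fin r → ℕ) :
    slWt r μ + rhoA r = slWt r (μ + 1) + fun _ => (r : ℚ) / 2 := by
  ext i
  have hlift : partLift r (μ + 1) i = partLift r μ i + (r - (i : ℕ)) := by
    have hcard : (#{j : Fin r | (i : ℕ) ≤ j} : ℚ) = r - (i : ℕ) := by
      have hadd := card_filter_add_card_filter_not (s := univ) fun j : Fin r => (j : ℕ) < i
      rw [Fin.card_filter_val_lt, min_eq_right i.is_le, card_fin] at hadd
      simp only [not_lt] at hadd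
      exact eq_sub_iff_add_eq'.2 (by exact_mod_cast hadd)
    simp [partLift, sum_add_distrib, hcard]
  have hsum : ∑ j : Fin r, ((j : ℚ) + 1) * ((μ + 1) j : ℕ) =
      (∑ j : Fin r, ((j : ℚ) + 1) * μ j) + r * (r + 1) / 2 := by
    rw [← sum_succ_eq, ← sum_add_distrib]
    exact sum_congr rfl fun j _ => by simp [mul_add]
  simp only [Pi.add_apply, slWt, rhoA] at *
  rw [hlift, hsum]
  field_simp
  ring

theorem altA_add_const (x : Fin (r + 1) → ℚ) (c : ℚ) :
    altA r (x + fun _ => c) = mono (fun _ => c) * altA r x := by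
  simp only [altA, mul_sum, mul_smul_comm, mono_mul_mono, add_comm x]
  rfl

theorem altA_slWt_add_rhoA (μ : Fin r → ℕ) :
    altA r (slWt r μ + rhoA r) = mono (fun _ => (r : ℚ) / 2) * altA r (slWt r (μ + 1)) := by
  rw [slWt_add_rhoA, altA_add_const]

theorem slWt_zero : slWt r 0 = 0 := by ext i; simp [slWt, partLift]

theorem slWt_one (i : Fin (r + 1)) : slWt r 1 i = r / 2 - (i : ℕ) := by
  have h := congrFun (slWt_add_rhoA (0 : Fin r → ℕ)) i
  rw [slWt_zero, zero_add, Pi.add_apply, rhoA] at h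
  linear_combination -h

theorem altA_rhoA : altA r (rhoA r) = mono (fun _ => (r : ℚ) / 2) * altA r (slWt r 1) := by
  rw [← zero_add (rhoA r), ← slWt_zero, altA_slWt_add_rhoA, zero_add]

theorem mono_ne_zero {k : ℕ} (u : Fin k → ℚ) : mono u ≠ 0 := by
  simp [mono]

/-- The positive roots of `A_r`. -/
def typeARoots (r : ℕ) : Finset (Fin (r + 1) → ℚ) :=
  (univ.filter fun p : Fin (r + 1) × Fin (r + 1) => p.1 < p.2).image fun p =>
    Pi.single p.1 1 - Pi.single p.2 1

theorem prod_typeARoots {M : Type*} [CommMonoid M] (f : (Fin (r + 1) → ℚ) → M) :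
    ∏ β ∈ typeARoots r, f β =
      ∏ i : Fin (r + 1), ∏ j ∈ Ioi i, f (Pi.single i 1 - Pi.single j 1) := by
  rw [typeARoots, prod_image, prod_sigma']
  · refine prod_nbij' (fun p => ⟨p.1, p.2⟩) (fun p => (p.1, p.2)) ?_ ?_ ?_ ?_ ?_ <;> simp
  · rintro ⟨i, j⟩ hij ⟨i', j'⟩ - h
    have hne : i ≠ j := (mem_filter.1 hij).2.ne
    have hi := congrFun h i
    have hj := congrFun h j
    simp only [Pi.sub_apply, Pi.single_apply, hne, hne.symm, if_true, if_false] at hi hj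
    have hi' : i = i' := by
      by_contra hii'
      split_ifs at hi <;> norm_num at hi
    have hj' : j = j' := by
      by_contra hjj'
      split_ifs at hj <;> norm_num at hj
    rw [hi', hj']

theorem mono_sub_mono (u v : Fin r → ℚ) :
    mono u - mono v = mono ((1 / 2 : ℚ) • (u + v)) * rootFactor (u - v) := by
  rw [rootFactor, mul_sub, mono_mul_mono, mono_mul_mono]
  congr 2 <;> module

theorem altA_slWt_one_eq_weylDenominator : altA r (slWt r 1) = weylDenominator (typeARoots r) := by
  refine mul_left_cancel₀ (mono_ne_zero fun _ => (r : ℚ) / 2) ?_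
  have hsum : ∑ i : Fin (r + 1), ∑ j ∈ Ioi i,
      (1 / 2 : ℚ) • (Pi.single i 1 + Pi.single j 1 : Fin (r + 1) → ℚ) = fun _ => (r : ℚ) / 2 := by
    ext k
    have hfst : ∑ i : Fin (r + 1), ∑ _j ∈ Ioi i, (Pi.single i 1 : Fin (r + 1) → ℚ) k =
        r - (k : ℕ) := by
      simp [Pi.single_apply, Nat.cast_sub k.is_le]
    have hsnd : ∑ i : Fin (r + 1), ∑ j ∈ Ioi i, (Pi.single j 1 : Fin (r + 1) → ℚ) k = (k : ℕ) := by
      simp [Pi.single_apply, filter_gt_eq_Iio]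
    simp only [Finset.sum_apply, Pi.smul_apply, Pi.add_apply, smul_eq_mul, ← mul_sum,
      sum_add_distrib, hfst, hsnd]
    ring
  rw [← altA_rhoA, altA_rhoA_eq_prod, weylDenominator, prod_typeARoots, ← hsum]
  simp only [mono_sub_mono, mono_sum, prod_mul_distrib]

end TypeA

/-! ### The half-spin character of type `D` -/

section TypeD

variable {n : ℕ}

/-- The sign changes in the Weyl group of `D_n`. -/
def evenSigns (n : ℕ) : Finset (Fin n → ℤˣ) := {ε | ∏ i, ε i = 1}

theorem mem_evenSigns {ε : Fin n → ℤˣ} : ε ∈ evenSigns n ↔ ∏ i, ε i = 1 := by simp [evenSigns]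

theorem evenSigns_mul {ε η : Fin n → ℤˣ} (hε : ε ∈ evenSigns n) (hη : η ∈ evenSigns n) :
    ε * η ∈ evenSigns n := by
  rw [mem_evenSigns] at *
  simp [prod_mul_distrib, hε, hη]

theorem evenSigns_comp_perm {ε : Fin n → ℤˣ} (hε : ε ∈ evenSigns n) (σ : Equiv.Perm (Fin n)) :
    ε ∘ σ ∈ evenSigns n := by
  rw [mem_evenSigns] at *
  rwa [← Equiv.prod_comp σ] at hε

/-- The action on weights of the signed permutation with permutation `σ` and signs `ε`. -/
def signedPerm (σ : Equiv.Perm (Fin n)) (ε : Fin n → ℤˣ) (v : Fin n → ℚ) : Fin n → ℚ :=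
  fun i => ((ε i : ℤ) : ℚ) * v (σ i)

theorem prod_ite_neg_one (s : Fin n → Bool) :
    ∏ i, (if s i then -1 else 1 : ℤˣ) = (-1) ^ #{i | s i = true} := by
  rw [card_filter, ← prod_pow_eq_pow_sum]
  exact prod_congr rfl fun i _ => by split_ifs <;> simp

theorem altY_D_eq_sum (v : Fin n → ℚ) : altY CType.D n v =
    ∑ σ : Equiv.Perm (Fin n), ∑ ε ∈ evenSigns n,
      (Equiv.Perm.sign σ : ℤ) • mono (signedPerm σ ε v) := by
  refine sum_congr rfl fun σ _ => ?_
  rw [evenSigns, sum_filter]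
  refine sum_nbij' (fun s i => if s i then -1 else 1) (fun ε i => decide (ε i = -1))
    (fun _ _ => mem_univ _) (fun _ _ => mem_univ _)
    (fun s _ => by ext i; cases h : s i <;> simp [h]) (fun ε _ => ?_) fun s _ => ?_
  · ext i
    rcases Int.units_eq_one_or (ε i) with h | h <;> simp [h]
  · have heven : (-1 : ℤˣ) ^ #{i | s i = true} = 1 ↔ Even #{i | s i = true} :=
      neg_one_pow_eq_one_iff_even (by decide)
    rw [prod_ite_neg_one]
    by_cases h : Even #{i | s i = true}
    · rw [if_pos (heven.2 h), if_neg (by simp [h]), h.neg_one_pow, mul_one]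
      congr 2
      ext i
      cases hs : s i <;> simp [signedPerm, hs]
    · rw [if_neg (mt heven.1 h), if_pos ⟨rfl, h⟩]

theorem altY_D_eq_zero_of_signedPerm_eq {v : Fin n → ℚ} {τ : Equiv.Perm (Fin n)} {η : Fin n → ℤˣ}
    (hη : η ∈ evenSigns n) (hτ : Equiv.Perm.sign τ = -1) (hv : signedPerm τ η v = v) :
    altY CType.D n v = 0 := by
  apply eq_zero_of_eq_neg
  conv_lhs => rw [altY_D_eq_sum]
  rw [altY_D_eq_sum, ← sum_neg_distrib, ← Equiv.sum_comp (Equiv.mulLeft τ)]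
  refine sum_congr rfl fun σ _ => ?_
  rw [← sum_neg_distrib]
  have hησ := evenSigns_comp_perm hη σ
  refine sum_nbij' (· * (η ∘ σ)) (· * (η ∘ σ)) (fun ε hε => evenSigns_mul hε hησ)
    (fun ε hε => evenSigns_mul hε hησ) (fun ε _ => ?_) (fun ε _ => ?_) fun ε _ => ?_
  · ext i; simp [mul_assoc, Int.units_mul_self]
  · ext i; simp [mul_assoc, Int.units_mul_self]
  · have hact : signedPerm (τ * σ) ε v = signedPerm σ (ε * (η ∘ σ)) v := by
      ext i
      conv_rhs => rw [← hv]
      have hsq : ((η (σ i) : ℤ) : ℚ) * (η (σ i) : ℤ) = 1 := by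
        rcases Int.units_eq_one_or (η (σ i)) with h | h <;> simp [h]
      simp only [signedPerm, Equiv.Perm.mul_apply, Pi.mul_apply, Function.comp, Units.val_mul,
        Int.cast_mul]
      linear_combination (-((ε i : ℤ) : ℚ) * v (τ (σ i))) * hsq
    rw [Equiv.coe_mulLeft, Equiv.Perm.sign_mul, hτ, hact]
    simp

theorem altY_D_eq_zero_of_eq {v : Fin n → ℚ} {i j : Fin n} (hij : i ≠ j) (h : v i = v j) :
    altY CType.D n v = 0 :=
  altY_D_eq_zero_of_signedPerm_eq (mem_evenSigns.2 (prod_const_one)) (Equiv.Perm.sign_swap hij) (by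
    conv_rhs => rw [← comp_swap_eq_self h]
    ext k
    simp [signedPerm])

theorem altY_D_eq_zero_of_eq_neg {v : Fin n → ℚ} {i j : Fin n} (hij : i ≠ j) (h : v i = -v j) :
    altY CType.D n v = 0 := by
  refine altY_D_eq_zero_of_signedPerm_eq (η := fun k => if k ∈ ({i, j} : Finset _) then -1 else 1)
    (mem_evenSigns.2 ?_) (Equiv.Perm.sign_swap hij) ?_
  · rw [prod_ite_mem, univ_inter, prod_pair hij]
    rfl
  · ext k
    rcases eq_or_ne k i with rfl | hki
    · simp [signedPerm, h]
    rcases eq_or_ne k j with rfl | hkj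
    · simp [signedPerm, h]
    · simp [signedPerm, hki, hkj, Equiv.swap_apply_of_ne_of_ne]

theorem altY_D_rhoY_ne_zero : altY CType.D n (rhoY CType.D n) ≠ 0 := by
  have hpos : ∀ i, 0 ≤ rhoY CType.D n i := fun i => by
    have : ((i : ℕ) : ℚ) + 1 ≤ n := by exact_mod_cast i.2
    simp only [rhoY]
    linarith
  have hone : ∀ σ ε, signedPerm σ ε (rhoY CType.D n) = rhoY CType.D n → σ = 1 := fun σ ε h => by
    ext i
    have habs := congrArg abs (congrFun h i)
    rw [signedPerm, abs_mul, abs_of_nonneg (hpos _), abs_of_nonneg (hpos _)] at habs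
    have hε : |((ε i : ℤ) : ℚ)| = 1 := by
      rcases Int.units_eq_one_or (ε i) with h | h <;> simp [h]
    simpa [rhoY, hε] using habs
  intro h
  have hcoeff := congrArg (fun F : CharRing n => F.coeff (rhoY CType.D n)) h
  simp only [altY_D_eq_sum, ← sum_product', coeff_sum_smul_mono, AddMonoidAlgebra.coeff_zero,
    Finsupp.zero_apply] at hcoeff
  have hnonneg : ∀ p ∈ univ ×ˢ evenSigns n, 0 ≤ if signedPerm p.1 p.2 (rhoY CType.D n) =
      rhoY CType.D n then (Equiv.Perm.sign p.1 : ℤ) else 0 := fun p _ => by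
    split_ifs with hp
    · simp [hone _ _ hp]
    · rfl
  have hterm := (sum_eq_zero_iff_of_nonneg hnonneg).1 hcoeff (1, 1)
    (mem_product.2 ⟨mem_univ _, mem_evenSigns.2 prod_const_one⟩)
  simp [signedPerm, funext_iff] at hterm

/-- The weight `½ (ε₁, …, ε_n)` of the spin module. -/
def spinWeight (ε : Fin n → ℤˣ) : Fin n → ℚ := fun i => ((ε i : ℤ) : ℚ) / 2

/-- The character of the half-spin module of highest weight `½ (1, …, 1)`. -/
def halfSpinChar (n : ℕ) : CharRing n := ∑ ε ∈ evenSigns n, mono (spinWeight ε)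

theorem signedPerm_add (σ : Equiv.Perm (Fin n)) (ε : Fin n → ℤˣ) (x y : Fin n → ℚ) :
    signedPerm σ ε (x + y) = signedPerm σ ε x + signedPerm σ ε y := by
  ext i
  simp [signedPerm, mul_add]

theorem halfSpinChar_eq_sum_signedPerm (σ : Equiv.Perm (Fin n)) {ε : Fin n → ℤˣ}
    (hε : ε ∈ evenSigns n) :
    halfSpinChar n = ∑ η ∈ evenSigns n, mono (signedPerm σ ε (spinWeight η)) := by
  refine sum_nbij' (fun η => (ε * η) ∘ σ.symm) (fun η => ε * (η ∘ σ))
    (fun η hη => evenSigns_comp_perm (evenSigns_mul hε hη) _)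
    (fun η hη => evenSigns_mul hε (evenSigns_comp_perm hη _)) (fun η _ => ?_) (fun η _ => ?_)
    fun η _ => ?_
  · ext i; simp [← mul_assoc, Int.units_mul_self]
  · ext i; simp [← mul_assoc, Int.units_mul_self]
  · congr 1
    ext i
    have hsq : ((ε i : ℤ) : ℚ) * (ε i : ℤ) = 1 := by
      rcases Int.units_eq_one_or (ε i) with h | h <;> simp [h]
    simp only [spinWeight, signedPerm, Function.comp, Equiv.symm_apply_apply, Pi.mul_apply,
      Units.val_mul, Int.cast_mul]
    linear_combination (-((η i : ℤ) : ℚ) / 2) * hsq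

theorem altY_D_mul_halfSpinChar (v : Fin n → ℚ) :
    altY CType.D n v * halfSpinChar n = ∑ η ∈ evenSigns n, altY CType.D n (spinWeight η + v) := by
  simp only [altY_D_eq_sum]
  rw [sum_mul, sum_comm]
  refine sum_congr rfl fun σ _ => ?_
  rw [sum_mul, sum_comm]
  refine sum_congr rfl fun ε hε => ?_
  rw [halfSpinChar_eq_sum_signedPerm σ hε, mul_sum]
  refine sum_congr rfl fun η _ => ?_
  rw [smul_mul_assoc, mono_mul_mono, signedPerm_add, add_comm]

theorem eq_one_of_last_eq_one {ε : Fin (n + 1) → ℤˣ}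
    (hstep : ∀ i : Fin n, ε i.castSucc = -1 → ε i.succ ≠ 1) (hlast : ε (Fin.last n) = 1) :
    ε = 1 := by
  ext1 i
  induction i using Fin.reverseInduction with
  | last => exact hlast
  | cast i ih => exact (Int.units_eq_one_or _).resolve_right fun h => hstep i h ih

theorem exists_singular_pair_of_mem_evenSigns {ε : Fin (n + 2) → ℤˣ} (hε : ε ∈ evenSigns (n + 2))
    (hne : ε ≠ 1) : (∃ i : Fin (n + 1), ε i.castSucc = -1 ∧ ε i.succ = 1) ∨
      ε (Fin.last n).castSucc = -1 ∧ ε (Fin.last n).succ = -1 := by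
  by_contra! h
  obtain ⟨hstep, hlast⟩ := h
  have hlast' : ε (Fin.last n).succ = -1 :=
    (Int.units_eq_one_or _).resolve_left fun h => hne (eq_one_of_last_eq_one hstep h)
  have hinit : ε ∘ Fin.castSucc = 1 :=
    eq_one_of_last_eq_one (fun i => hstep i.castSucc)
      ((Int.units_eq_one_or _).resolve_right fun h => hlast h hlast')
  have hprod : ∏ i : Fin (n + 1), ε i.castSucc = 1 := prod_eq_one fun i _ => congrFun hinit i
  rw [mem_evenSigns, Fin.prod_univ_castSucc, hprod, one_mul] at hε
  rw [Fin.succ_last, hε] at hlast'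
  exact absurd hlast' (by decide)

theorem altY_D_rhoY_mul_halfSpinChar :
    altY CType.D (n + 2) (rhoY CType.D (n + 2)) * halfSpinChar (n + 2) =
      altY CType.D (n + 2) (spinWeight 1 + rhoY CType.D (n + 2)) := by
  rw [altY_D_mul_halfSpinChar]
  refine sum_eq_single_of_mem 1 (mem_evenSigns.2 prod_const_one) fun ε hε hne => ?_
  rcases exists_singular_pair_of_mem_evenSigns hε hne with ⟨i, hi, hi'⟩ | ⟨hi, hi'⟩
  · refine altY_D_eq_zero_of_eq (Fin.castSucc_lt_succ (i := i)).ne ?_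
    simp [spinWeight, rhoY, hi, hi']
    ring
  · refine altY_D_eq_zero_of_eq_neg (Fin.castSucc_lt_succ (i := Fin.last n)).ne ?_
    rw [Pi.add_apply, Pi.add_apply, spinWeight, spinWeight, hi, hi']
    simp [rhoY]
    ring

theorem epsWt_D_last : epsWt CType.D (n + 2) (e (n + 2) (n + 2)) = spinWeight 1 := by
  ext i
  have he : ∀ j, e (n + 2) (n + 2) j = if j = Fin.last (n + 1) then 1 else 0 := by
    simp [e, Fin.ext_iff]
  have hsum : ∑ k ∈ univ.filter (fun k : Fin (n + 2) => (i : ℕ) ≤ k),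
      (e (n + 2) (n + 2) k : ℚ) = 1 := by
    simp [he, Fin.le_last]
  rw [epsWt, hsum]
  simp [cval, spinWeight, e]
  norm_num

theorem eq_halfSpinChar_of_isCharY {f : CharRing (n + 2)}
    (hf : IsCharY CType.D (n + 2) (e (n + 2) (n + 2)) f) : f = halfSpinChar (n + 2) := by
  rw [IsCharY, epsWt_D_last, ← altY_D_rhoY_mul_halfSpinChar] at hf
  exact mul_left_cancel₀ altY_D_rhoY_ne_zero hf

theorem prod_rootFactor_eq_sum_signs {k : ℕ} (w : Fin n → Fin k → ℚ) :
    ∏ i, rootFactor (w i) =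
      ∑ ε : Fin n → ℤˣ, ((∏ i, ε i : ℤˣ) : ℤ) • mono (∑ i, spinWeight ε i • w i) := by
  have hfactor : ∀ i, rootFactor (w i) =
      ∑ u : ℤˣ, (u : ℤ) • mono ((((u : ℤ) : ℚ) / 2) • w i) := fun i => by
    rw [show (univ : Finset ℤˣ) = {1, -1} from rfl, sum_pair (by decide), rootFactor,
      ← neg_smul, sub_eq_add_neg]
    norm_num
  simp only [hfactor]
  rw [prod_univ_sum, Fintype.piFinset_univ]
  refine sum_congr rfl fun ε _ => ?_
  simp only [mono_sum, spinWeight, zsmul_eq_mul, prod_mul_distrib]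
  push_cast
  rfl

end TypeD

/-! ### The root system `E₇` -/

section E7

theorem exteriorWeight_compl {r : ℕ} (S : Finset (Fin (r + 1))) :
    exteriorWeight Sᶜ = -exteriorWeight S := by
  ext i
  have hr : (r : ℚ) + 1 ≠ 0 := by positivity
  have hcard : (#Sᶜ : ℚ) = r + 1 - #S := by
    rw [card_compl, Nat.cast_sub (card_le_univ S), Fintype.card_fin]
    push_cast
    ring
  by_cases hi : i ∈ S <;> simp [exteriorWeight, hi, hcard] <;> field_simp <;> ring

theorem dotProduct_exteriorWeight {r : ℕ} {x : Fin (r + 1) → ℚ} (hx : ∑ i, x i = 0)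
    (S : Finset (Fin (r + 1))) : x ⬝ᵥ exteriorWeight S = ∑ i ∈ S, x i := by
  simp [dotProduct, exteriorWeight, mul_sub, ← sum_mul, hx]

theorem neg_mem_exteriorWeights {x : Fin 8 → ℚ} (hx : x ∈ exteriorWeights 7 4) :
    -x ∈ exteriorWeights 7 4 := by
  obtain ⟨S, hS, rfl⟩ := mem_exteriorWeights.1 hx
  exact mem_exteriorWeights.2 ⟨Sᶜ, by rw [card_compl, hS, Fintype.card_fin], exteriorWeight_compl S⟩

theorem eq_half_or_eq_neg_half {x : Fin 8 → ℚ} (hx : x ∈ exteriorWeights 7 4) (i : Fin 8) :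
    x i = 1 / 2 ∨ x i = -1 / 2 := by
  obtain ⟨S, hS, rfl⟩ := mem_exteriorWeights.1 hx
  by_cases hi : i ∈ S <;> simp [exteriorWeight, hS, hi] <;> norm_num

/-- A choice of one weight from each pair `±β` of weights of `⋀⁴ K⁸`: those whose index set avoids
the last basis vector. They are the positive roots of `E₇` outside its subsystem `A₇`. -/
def halfRoots : Finset (Fin 8 → ℚ) :=
  (powersetCard 4 univ).image fun S : Finset (Fin 7) => exteriorWeight (S.map Fin.castSuccEmb)

theorem mem_halfRoots {x : Fin 8 → ℚ} :
    x ∈ halfRoots ↔ x ∈ exteriorWeights 7 4 ∧ x 7 = -1 / 2 := by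
  simp only [halfRoots, mem_image, mem_powersetCard_univ]
  constructor
  · rintro ⟨S, hS, rfl⟩
    refine ⟨mem_exteriorWeights.2 ⟨_, by rw [card_map, hS], rfl⟩, ?_⟩
    have h7 : (7 : Fin 8) ∉ S.map Fin.castSuccEmb := fun h => by
      obtain ⟨i, -, hi⟩ := mem_map.1 h
      exact (Fin.castSucc_lt_last i).ne hi
    simp [exteriorWeight, hS, h7]
    norm_num
  · rintro ⟨hx, h7⟩
    obtain ⟨S, hS, rfl⟩ := mem_exteriorWeights.1 hx
    have h7S : (7 : Fin 8) ∉ S := fun h => by norm_num [exteriorWeight, hS, h] at h7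
    have hsub : S ⊆ univ.map Fin.castSuccEmb := fun i hi => mem_map.2
      ⟨i.castPred fun h => h7S (h ▸ hi : Fin.last 7 ∈ S), mem_univ _, i.castSucc_castPred _⟩
    obtain ⟨T, -, rfl⟩ := subset_map_iff.1 hsub
    exact ⟨T, by rwa [card_map] at hS, rfl⟩

theorem prod_halfRoots {M : Type*} [CommMonoid M] (f : (Fin 8 → ℚ) → M) :
    ∏ β ∈ halfRoots, f β =
      ∏ S ∈ powersetCard 4 univ, f (exteriorWeight (S.map Fin.castSuccEmb)) := by
  rw [halfRoots, prod_image]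
  intro S hS T hT h
  have hcard : #S = #T := (mem_powersetCard_univ.1 hS).trans (mem_powersetCard_univ.1 hT).symm
  ext i
  have hi : (if i ∈ S then (1 : ℚ) else 0) = if i ∈ T then 1 else 0 := by
    simpa [exteriorWeight, hcard] using congrFun h i.castSucc
  by_cases hiS : i ∈ S <;> by_cases hiT : i ∈ T <;> simp_all

theorem card_halfRoots : #halfRoots = 35 := by decide +kernel

theorem smul_mem_halfRoots {x : Fin 8 → ℚ} (hx : x ∈ exteriorWeights 7 4) :
    (-2 * x 7) • x ∈ halfRoots := by
  rcases eq_half_or_eq_neg_half hx 7 with h | h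
  · rw [h, show (-2 * (1 / 2) : ℚ) = -1 by norm_num, neg_one_smul]
    exact mem_halfRoots.2 ⟨neg_mem_exteriorWeights hx, by rw [Pi.neg_apply, h]; norm_num⟩
  · rw [h, show (-2 * (-1 / 2) : ℚ) = 1 by norm_num, one_smul]
    exact mem_halfRoots.2 ⟨hx, h⟩

/-- The positive roots of `E₇`, in the traceless coordinates of its subsystem `A₇`. -/
def e7Roots : Finset (Fin 8 → ℚ) := typeARoots 7 ∪ halfRoots

/-- The simple roots of `E₇`: a chain of type `A₆`, and `none` attached to its third node. -/
def e7Simple : Option (Fin 6) → Fin 8 → ℚ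
  | none => exteriorWeight {3, 4, 5, 6}
  | some i => Pi.single i.castSucc.castSucc 1 - Pi.single i.succ.castSucc 1

theorem reflection_single_sub_single {k : ℕ} (a b : Fin k) (x : Fin k → ℚ) :
    reflection (Pi.single a 1 - Pi.single b 1) x = x ∘ Equiv.swap a b := by
  ext i
  simp only [reflection_apply, dotProduct_sub, dotProduct_single, mul_one, Pi.sub_apply,
    Pi.smul_apply, Pi.single_apply, smul_eq_mul, Function.comp_apply, Equiv.swap_apply_def]
  split_ifs with ha hb <;> simp_all

theorem reflection_some_mem_e7Roots (i : Fin 6) {β : Fin 8 → ℚ} (hβ : β ∈ e7Roots)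
    (hne : β ≠ e7Simple (some i)) : reflection (e7Simple (some i)) β ∈ e7Roots := by
  have hcomp : reflection (e7Simple (some i)) β =
      β ∘ Equiv.swap i.castSucc.castSucc i.succ.castSucc :=
    reflection_single_sub_single _ _ β
  rw [hcomp]
  rcases mem_union.1 hβ with hA | hH
  · obtain ⟨⟨p, q⟩, hpq, rfl⟩ := mem_image.1 hA
    have hlt : ∀ i : Fin 6, ∀ p q : Fin 8, p < q →
        (p, q) ≠ (i.castSucc.castSucc, i.succ.castSucc) →
        Equiv.swap i.castSucc.castSucc i.succ.castSucc p <
          Equiv.swap i.castSucc.castSucc i.succ.castSucc q := by decide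
    have hpq' := hlt i p q (mem_filter.1 hpq).2 fun h => hne (by
      rw [(Prod.ext_iff.1 h).1, (Prod.ext_iff.1 h).2]; rfl)
    refine mem_union_left _ (mem_image.2 ⟨(_, _), mem_filter.2 ⟨mem_univ _, hpq'⟩, ?_⟩)
    ext j
    simp [Pi.single_apply, Equiv.swap_apply_eq_iff]
  · obtain ⟨hmem, h7⟩ := mem_halfRoots.1 hH
    have hfix : Equiv.swap i.castSucc.castSucc i.succ.castSucc (7 : Fin 8) = 7 :=
      Equiv.swap_apply_of_ne_of_ne (Fin.castSucc_lt_last _).ne' (Fin.castSucc_lt_last _).ne'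
    exact mem_union_right _ (mem_halfRoots.2
      ⟨exteriorWeights_comp_perm _ hmem, by rw [Function.comp_apply, hfix, h7]⟩)

theorem weylVector_e7Roots : weylVector e7Roots = slWt 7 (![0, 0, 0, 0, 0, 0, 10] + 1) := by
  decide +kernel

theorem isPositiveSystem_e7 : IsPositiveSystem e7Roots e7Simple where
  simple_mem := by decide +kernel
  simple_dot_self := by decide +kernel
  reflection_mem i := by
    rcases i with _ | i
    · decide +kernel
    · exact fun β => reflection_some_mem_e7Roots i
  dot_simple_int i β hβ := by
    have hden : ∀ i, ∀ β ∈ e7Roots, (β ⬝ᵥ e7Simple i).den = 1 := by decide +kernel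
    exact ⟨_, ((Rat.den_eq_one_iff _).1 (hden i β hβ)).symm⟩
  dot_weylVector_pos := by
    rw [weylVector_e7Roots]
    decide +kernel
  weylVector_nonneg_combination := by
    refine ⟨fun i => i.elim (49 / 2) ![17, 33, 48, 75 / 2, 26, 27 / 2], by decide +kernel, ?_⟩
    rw [weylVector_e7Roots]
    decide +kernel

theorem disjoint_typeARoots_halfRoots : Disjoint (typeARoots 7) halfRoots := by
  decide +kernel

theorem prod_e7Roots {M : Type*} [CommMonoid M] (f : (Fin 8 → ℚ) → M) :
    ∏ β ∈ e7Roots, f β = (∏ β ∈ typeARoots 7, f β) * ∏ β ∈ halfRoots, f β :=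
  prod_union disjoint_typeARoots_halfRoots

-- Composing with `σ` permutes the pairs `±β`; it reverses an even number of them.
theorem prod_halfRoots_comp_perm {f : (Fin 8 → ℚ) → ℚ} (hf : ∀ x, f (-x) = -f x)
    (σ : Equiv.Perm (Fin 8)) : ∏ β ∈ halfRoots, f (β ∘ σ) = ∏ β ∈ halfRoots, f β := by
  have hsign : ∀ j, ∏ β ∈ halfRoots, (-2 * β j) = 1 := by decide +kernel
  have hmaps : ∀ τ : Equiv.Perm (Fin 8), ∀ β ∈ halfRoots, (-2 * β (τ 7)) • (β ∘ τ) ∈ halfRoots :=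
    fun τ β hβ => smul_mem_halfRoots (exteriorWeights_comp_perm τ (mem_halfRoots.1 hβ).1)
  have hinv : ∀ τ : Equiv.Perm (Fin 8), ∀ β ∈ halfRoots,
      (-2 * ((-2 * β (τ 7)) • (β ∘ τ)) (τ.symm 7)) • ((-2 * β (τ 7)) • (β ∘ τ)) ∘ τ.symm = β :=
    fun τ β hβ => by
      obtain ⟨hmem, h7⟩ := mem_halfRoots.1 hβ
      ext i
      simp only [Pi.smul_apply, Function.comp, Equiv.apply_symm_apply, smul_eq_mul, h7]
      rcases eq_half_or_eq_neg_half hmem (τ 7) with h | h <;> rw [h] <;> ring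
  have hodd : ∀ β ∈ halfRoots, f (β ∘ σ) = (-2 * β (σ 7)) * f ((-2 * β (σ 7)) • (β ∘ σ)) :=
    fun β hβ => by
      rcases eq_half_or_eq_neg_half (mem_halfRoots.1 hβ).1 (σ 7) with h | h
      · rw [h, show (-2 * (1 / 2) : ℚ) = -1 by norm_num, neg_one_smul, hf]
        ring
      · rw [h, show (-2 * (-1 / 2) : ℚ) = 1 by norm_num, one_smul, one_mul]
  rw [prod_congr rfl hodd, prod_mul_distrib, hsign, one_mul]
  exact prod_nbij' (fun β => (-2 * β (σ 7)) • (β ∘ σ))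
    (fun β => (-2 * β (σ.symm 7)) • (β ∘ σ.symm)) (hmaps σ) (hmaps σ.symm) (hinv σ) (hinv σ.symm)
    fun _ _ => rfl

theorem prod_typeARoots_dotProduct_comp_perm {r : ℕ} (x : Fin (r + 1) → ℚ)
    (σ : Equiv.Perm (Fin (r + 1))) : ∏ β ∈ typeARoots r, (x ∘ σ) ⬝ᵥ β =
      (Equiv.Perm.sign σ : ℤ) * ∏ β ∈ typeARoots r, x ⬝ᵥ β := by
  have h := σ.prod_Ioi_comp_eq_sign_mul_prod (f := fun i j => x i - x j)
    fun i j => (neg_sub (x j) (x i)).symm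
  simpa [prod_typeARoots, dotProduct_sub] using h

theorem weylSign_e7Roots_comp_perm (x : Fin 8 → ℚ) (σ : Equiv.Perm (Fin 8)) :
    weylSign e7Roots (x ∘ σ) = Equiv.Perm.sign σ * weylSign e7Roots x := by
  have hhalf : ∏ β ∈ halfRoots, (x ∘ σ) ⬝ᵥ β = ∏ β ∈ halfRoots, x ⬝ᵥ β := by
    simp only [← dotProduct_comp_equiv_symm]
    exact prod_halfRoots_comp_perm (fun β => dotProduct_neg x β) σ.symm
  rw [weylSign, weylSign, prod_e7Roots, prod_e7Roots, hhalf, prod_typeARoots_dotProduct_comp_perm,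
    mul_assoc, sign_mul]
  rcases Int.units_eq_one_or (Equiv.Perm.sign σ) with h | h <;> simp [h]

theorem weylSign_e7Roots_neg (x : Fin 8 → ℚ) :
    weylSign e7Roots (-x) = -weylSign e7Roots x := by
  have hcard : #e7Roots = 63 := by decide +kernel
  simp only [weylSign, neg_dotProduct, prod_neg, hcard]
  rw [Odd.neg_one_pow (by decide), neg_one_mul, Left.sign_neg]
  simp

end E7

/-! ### The `E₇` denominator as a sum of `A₇` alternating sums -/

section E7Orbit

theorem sum_partLift {r : ℕ} (d : Fin r → ℕ) :
    ∑ i, partLift r d i = ∑ j : Fin r, ((j : ℚ) + 1) * d j := by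
  simp only [partLift, sum_filter]
  rw [sum_comm]
  refine sum_congr rfl fun j _ => ?_
  have hcard : #{i : Fin (r + 1) | (i : ℕ) ≤ j} = (j : ℕ) + 1 := by
    simp only [← Nat.lt_succ_iff, Fin.card_filter_val_lt]
    omega
  rw [← sum_filter, sum_const, hcard, nsmul_eq_mul]
  push_cast
  rfl

theorem sum_slWt {r : ℕ} (d : Fin r → ℕ) : ∑ i, slWt r d i = 0 := by
  simp only [slWt, sum_sub_distrib, sum_partLift, sum_const, card_univ, Fintype.card_fin,
    nsmul_eq_mul]
  push_cast
  field_simp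
  ring

/-- The highest weights `μ` of the restricted half-spin module. Shifted by `ρ`, they are the
representatives modulo `S₈` of the elements of the `W(E₇)`-orbit of the Weyl vector of `E₇` that
lie in its coset of the root lattice of `A₇`. -/
def spinHighestWeights : Finset (Fin 7 → ℕ) :=
  {![9, 0, 0, 0, 1, 0, 0], ![7, 0, 0, 2, 0, 0, 1], ![7, 0, 1, 0, 0, 2, 0], ![5, 0, 1, 2, 0, 1, 0],
   ![5, 0, 2, 0, 1, 0, 2], ![5, 1, 0, 1, 0, 2, 1], ![6, 0, 0, 0, 0, 4, 0], ![3, 0, 3, 0, 2, 0, 0],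
   ![3, 0, 3, 1, 0, 0, 2], ![3, 1, 1, 1, 1, 1, 1], ![3, 1, 2, 0, 0, 1, 3], ![3, 2, 0, 0, 2, 0, 3],
   ![4, 0, 0, 2, 0, 3, 0], ![4, 0, 1, 0, 1, 2, 2], ![1, 0, 5, 0, 0, 1, 0], ![1, 1, 3, 0, 1, 1, 1],
   ![1, 2, 1, 0, 3, 0, 1], ![1, 2, 1, 1, 1, 0, 3], ![1, 3, 0, 1, 0, 0, 5], ![2, 0, 2, 0, 2, 2, 0],
   ![2, 0, 2, 1, 0, 2, 2], ![2, 1, 0, 1, 2, 1, 2], ![2, 1, 1, 0, 1, 1, 4], ![3, 0, 0, 0, 3, 0, 4],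
   ![0, 0, 4, 0, 0, 3, 0], ![0, 1, 2, 0, 2, 1, 2], ![0, 2, 0, 0, 4, 1, 0], ![0, 2, 0, 2, 0, 1, 4],
   ![0, 3, 0, 0, 0, 1, 6], ![1, 0, 1, 0, 4, 0, 2], ![1, 0, 1, 1, 2, 0, 4], ![1, 1, 0, 1, 1, 0, 6],
   ![0, 0, 0, 0, 6, 0, 0], ![0, 0, 0, 3, 0, 0, 6], ![0, 1, 0, 1, 0, 0, 8],
   ![0, 0, 0, 0, 0, 0, 10]}

/-- The vector `x` of traceless coordinates lies in the coset, modulo the root lattice of `A₇`, of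
the weights on which the centre of `SL₈` acts by the `2 u`-th power of the standard character. -/
def IsOfClass (u : ℤˣ) (x : Fin 8 → ℚ) : Prop := ∀ i, ∃ m : ℤ, x i = m - (u : ℤ) / 4

theorem IsOfClass.comp_perm {u : ℤˣ} {x : Fin 8 → ℚ} (hx : IsOfClass u x)
    (σ : Equiv.Perm (Fin 8)) : IsOfClass u (x ∘ σ) := fun i => hx (σ i)

theorem IsOfClass.units_smul {u : ℤˣ} {x : Fin 8 → ℚ} (hx : IsOfClass u x) (v : ℤˣ) :
    IsOfClass (v * u) (v • x) := fun i => by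
  obtain ⟨m, hm⟩ := hx i
  refine ⟨v * m, ?_⟩
  rw [Pi.smul_apply, hm, Units.smul_def, zsmul_eq_mul]
  push_cast
  ring

theorem units_eq_of_intCast_sub_eq {m n : ℤ} {u v : ℤˣ}
    (h : (m : ℚ) - (u : ℤ) / 4 = n - (v : ℤ) / 4) : u = v := by
  have hint : (4 * m - u : ℤ) = 4 * n - v := by
    have : (4 * m - (u : ℤ) : ℚ) = 4 * n - (v : ℤ) := by linarith
    exact_mod_cast this
  rcases Int.units_eq_one_or u with rfl | rfl <;> rcases Int.units_eq_one_or v with rfl | rfl <;>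
    first | rfl | (simp at hint; omega)

theorem IsOfClass.unique {u v : ℤˣ} {x : Fin 8 → ℚ} (hu : IsOfClass u x) (hv : IsOfClass v x) :
    u = v := by
  obtain ⟨m, hm⟩ := hu 0
  obtain ⟨n, hn⟩ := hv 0
  exact units_eq_of_intCast_sub_eq (hm.symm.trans hn)

theorem IsOfClass.exists_int_dotProduct {u : ℤˣ} {x : Fin 8 → ℚ} (hx : IsOfClass u x)
    (hsum : ∑ i, x i = 0) (i : Option (Fin 6)) : ∃ m : ℤ, x ⬝ᵥ e7Simple i = m := by
  choose m hm using hx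
  rcases i with _ | i
  · refine ⟨m 3 + m 4 + m 5 + m 6 - u, ?_⟩
    rw [e7Simple, dotProduct_exteriorWeight hsum]
    rw [sum_insert (by decide), sum_insert (by decide), sum_pair (by decide)]
    simp only [hm]
    push_cast
    ring
  · refine ⟨m i.castSucc.castSucc - m i.succ.castSucc, ?_⟩
    simp only [e7Simple, dotProduct_sub, dotProduct_single, mul_one, hm]
    push_cast
    ring

theorem exists_perm_of_ofFn_perm {n : ℕ} {α : Type*} {x y : Fin n → α}
    (h : (List.ofFn x).Perm (List.ofFn y)) (hy : Function.Injective y) :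
    ∃ σ : Equiv.Perm (Fin n), x = y ∘ σ := by
  have hx : Function.Injective x := List.nodup_ofFn.1 (h.nodup_iff.2 (List.nodup_ofFn.2 hy))
  have hmem : ∀ i, ∃ j, y j = x i := fun i =>
    List.mem_ofFn.1 (h.mem_iff.1 (List.mem_ofFn.2 ⟨i, rfl⟩))
  choose σ hσ using hmem
  have hσinj : Function.Injective σ := fun i j hij => hx (by rw [← hσ, ← hσ, hij])
  exact ⟨Equiv.ofBijective σ (Finite.injective_iff_bijective.1 hσinj), funext fun i => (hσ i).symm⟩

/-- The integral vector `8 (μ + ρ)` in traceless coordinates. -/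
def scaledWeight (μ : Fin 7 → ℕ) (i : Fin 8) : ℤ :=
  8 * ∑ j : Fin 7, (if (i : ℕ) ≤ (j : ℕ) then (μ j : ℤ) + 1 else 0) -
    ∑ j : Fin 7, ((j : ℤ) + 1) * (μ j + 1)

theorem scaledWeight_eq (μ : Fin 7 → ℕ) (i : Fin 8) :
    (scaledWeight μ i : ℚ) = 8 * slWt 7 (μ + 1) i := by
  simp only [scaledWeight, slWt, partLift, sum_filter, Pi.add_apply, Pi.one_apply]
  push_cast
  ring

theorem isOfClass_of_mem_spinHighestWeights {μ : Fin 7 → ℕ} (hμ : μ ∈ spinHighestWeights) :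
    IsOfClass 1 (slWt 7 (μ + 1)) := fun i => by
  have hmod : ∀ μ ∈ spinHighestWeights, ∀ i, 8 ∣ scaledWeight μ i + 2 := by decide +kernel
  obtain ⟨m, hm⟩ := hmod μ hμ i
  refine ⟨m, ?_⟩
  have hcast : (scaledWeight μ i + 2 : ℚ) = 8 * m := by exact_mod_cast hm
  rw [scaledWeight_eq] at hcast
  push_cast
  linarith

theorem dot_self_of_mem_spinHighestWeights {μ : Fin 7 → ℕ} (hμ : μ ∈ spinHighestWeights) :
    slWt 7 (μ + 1) ⬝ᵥ slWt 7 (μ + 1) = 399 / 2 := by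
  have hdot : ∀ μ ∈ spinHighestWeights, scaledWeight μ ⬝ᵥ scaledWeight μ = 32 * 399 := by
    decide +kernel
  have hcast : ∑ i, (scaledWeight μ i * scaledWeight μ i : ℚ) = 32 * 399 := by
    exact_mod_cast hdot μ hμ
  simp only [scaledWeight_eq, mul_mul_mul_comm, ← mul_sum] at hcast
  rw [dotProduct]
  linarith

theorem prod_typeARoots_dotProduct_pos {r : ℕ} {x : Fin (r + 1) → ℚ} (hx : StrictAnti x) :
    0 < ∏ β ∈ typeARoots r, x ⬝ᵥ β := by
  rw [prod_typeARoots]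
  refine prod_pos fun i _ => prod_pos fun j hij => ?_
  simpa [dotProduct_sub] using hx (mem_Ioi.1 hij)

theorem weylSign_of_mem_spinHighestWeights {μ : Fin 7 → ℕ} (hμ : μ ∈ spinHighestWeights) :
    weylSign e7Roots (slWt 7 (μ + 1)) = 1 := by
  have hpos : ∀ μ ∈ spinHighestWeights,
      0 < ∏ S ∈ powersetCard 4 univ, ∑ j ∈ S, scaledWeight μ (Fin.castSucc j) := by
    decide +kernel
  have hscaled : 0 < ∏ β ∈ halfRoots, (8 : ℚ) * (slWt 7 (μ + 1) ⬝ᵥ β) := by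
    rw [prod_halfRoots]
    simp only [dotProduct_exteriorWeight (sum_slWt _), sum_map, mul_sum, ← scaledWeight_eq]
    exact_mod_cast hpos μ hμ
  rw [prod_mul_distrib] at hscaled
  have hhalf := (pos_iff_pos_of_mul_pos hscaled).1 (prod_pos fun _ _ => by norm_num)
  rw [weylSign, prod_e7Roots, sign_pos (mul_pos
    (prod_typeARoots_dotProduct_pos (strictAnti_slWt_add_one μ)) hhalf)]
  rfl

/-- The integral vector `16 s(μ + ρ)`, where `s` is the reflection in the root of `E₇` with index
set `S`. -/
def scaledReflection (μ : Fin 7 → ℕ) (S : Finset (Fin 7)) : Fin 8 → ℤ :=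
  2 • scaledWeight μ - (∑ j ∈ S, scaledWeight μ j.castSucc) •
    fun i => if i ∈ S.map Fin.castSuccEmb then 1 else -1

theorem scaledReflection_eq (μ : Fin 7 → ℕ) {S : Finset (Fin 7)} (hS : #S = 4) (i : Fin 8) :
    (scaledReflection μ S i : ℚ) =
      16 * reflection (exteriorWeight (S.map Fin.castSuccEmb)) (slWt 7 (μ + 1)) i := by
  have hint : scaledReflection μ S i = 2 * scaledWeight μ i -
      (∑ j ∈ S, scaledWeight μ j.castSucc) * if i ∈ S.map Fin.castSuccEmb then 1 else -1 := by
    simp [scaledReflection]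
  rw [hint, reflection_apply, dotProduct_exteriorWeight (sum_slWt _), sum_map]
  push_cast
  simp only [scaledWeight_eq, ← mul_sum, Pi.sub_apply, Pi.smul_apply, smul_eq_mul, exteriorWeight,
    card_map, hS]
  split_ifs <;> push_cast <;> ring

-- The reflection changes the class iff the pairing of `μ + ρ` with the root is odd.
set_option maxRecDepth 10000 in
theorem exists_insertionSort_scaledReflection_eq :
    ∀ S ∈ powersetCard 4 (univ : Finset (Fin 7)), ∀ μ ∈ spinHighestWeights,
      ∃ ν ∈ spinHighestWeights,
        (List.ofFn (((∑ j ∈ S, scaledWeight μ j.castSucc) / 8).negOnePow • scaledReflection μ S)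
          ).insertionSort (· ≥ ·) = List.ofFn (2 • scaledWeight ν) := by
  decide +kernel

theorem reflection_neg {k : ℕ} (a x : Fin k → ℚ) : reflection (-a) x = reflection a x := by
  simp [reflection_apply]

theorem exists_reflection_eq {μ : Fin 7 → ℕ} (hμ : μ ∈ spinHighestWeights) {β : Fin 8 → ℚ}
    (hβ : β ∈ exteriorWeights 7 4) : ∃ u : ℤˣ, ∃ ν ∈ spinHighestWeights,
      ∃ σ : Equiv.Perm (Fin 8), reflection β (slWt 7 (μ + 1)) = u • (slWt 7 (ν + 1) ∘ σ) := by
  wlog hhalf : β ∈ halfRoots generalizing β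
  · rw [← reflection_neg]
    refine this (neg_mem_exteriorWeights hβ) (mem_halfRoots.2 ⟨neg_mem_exteriorWeights hβ, ?_⟩)
    rcases eq_half_or_eq_neg_half hβ 7 with h | h
    · rw [Pi.neg_apply, h]
      norm_num
    · exact absurd (mem_halfRoots.2 ⟨hβ, h⟩) hhalf
  obtain ⟨S, hS, rfl⟩ := mem_image.1 hhalf
  obtain ⟨ν, hν, hsort⟩ := exists_insertionSort_scaledReflection_eq S hS μ hμ
  set u := ((∑ j ∈ S, scaledWeight μ j.castSucc) / 8).negOnePow
  have hinj : Function.Injective (2 • scaledWeight ν) := fun i j hij => by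
    have hcast : (scaledWeight ν i : ℚ) = scaledWeight ν j := by simpa using hij
    rw [scaledWeight_eq, scaledWeight_eq] at hcast
    exact (strictAnti_slWt_add_one ν).injective (by linarith)
  obtain ⟨σ, hσ⟩ :=
    exists_perm_of_ofFn_perm (hsort ▸ (List.perm_insertionSort _ _).symm) hinj
  refine ⟨u, ν, hν, σ, funext fun i => ?_⟩
  have hi : ((u : ℤ) : ℚ) * scaledReflection μ S i = 2 * scaledWeight ν (σ i) := by
    have h := congrFun hσ i
    simp only [Pi.smul_apply, Units.smul_def, smul_eq_mul, Function.comp_apply] at h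
    exact_mod_cast h
  rw [scaledReflection_eq μ (mem_powersetCard_univ.1 hS), scaledWeight_eq] at hi
  have hu : ((u : ℤ) : ℚ) * (u : ℤ) = 1 := by
    rcases Int.units_eq_one_or u with h | h <;> simp [h]
  rw [Pi.smul_apply, Units.smul_def, zsmul_eq_mul, Function.comp_apply]
  linear_combination ((u : ℤ) : ℚ) / 16 * hi -
    reflection (exteriorWeight (S.map Fin.castSuccEmb)) (slWt 7 (μ + 1)) i * hu

/-- The element `u w (μ + ρ)` of the orbit, `w ∈ S₈` and `u = ±1`. -/
def orbitVector (p : (Fin 7 → ℕ) × Equiv.Perm (Fin 8) × ℤˣ) : Fin 8 → ℚ :=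
  p.2.2 • (slWt 7 (p.1 + 1) ∘ p.2.1)

/-- The set of the `u w (μ + ρ)` with `μ ∈ T`, `w ∈ S₈` and `u = ±1`; for `spinHighestWeights` it is
the orbit of the Weyl vector of `E₇` under its Weyl group. It is irreducible because unification
would otherwise try to enumerate its elements. -/
@[irreducible] def orbitVectors (T : Finset (Fin 7 → ℕ)) : Finset (Fin 8 → ℚ) :=
  (T ×ˢ univ).image orbitVector

theorem mem_orbitVectors {T : Finset (Fin 7 → ℕ)} {x : Fin 8 → ℚ} : x ∈ orbitVectors T ↔
    ∃ μ ∈ T, ∃ (σ : Equiv.Perm (Fin 8)) (u : ℤˣ), x = u • (slWt 7 (μ + 1) ∘ σ) := by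
  simp [orbitVectors, orbitVector, eq_comm]

theorem sum_orbitVectors {T : Finset (Fin 7 → ℕ)} (hT : Set.InjOn orbitVector {p | p.1 ∈ T})
    (f : (Fin 8 → ℚ) → CharRing 8) :
    ∑ x ∈ orbitVectors T, f x =
      ∑ μ ∈ T, ∑ σ : Equiv.Perm (Fin 8), ∑ u : ℤˣ, f (orbitVector (μ, σ, u)) := by
  rw [orbitVectors, sum_image (hT.mono fun p hp => (mem_product.1 hp).1), sum_product]
  simp only [Fintype.sum_prod_type]

theorem orbitVector_injOn : Set.InjOn orbitVector {p | p.1 ∈ spinHighestWeights} := by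
  rintro ⟨μ, σ, u⟩ hp ⟨ν, τ, v⟩ hq h
  have hμ := (isOfClass_of_mem_spinHighestWeights hp).comp_perm σ
  have hν := (isOfClass_of_mem_spinHighestWeights hq).comp_perm τ
  obtain rfl : u = v := by
    have hu : IsOfClass (u * 1) (orbitVector (μ, σ, u)) := hμ.units_smul u
    have hv : IsOfClass (v * 1) (orbitVector (μ, σ, u)) := h ▸ hν.units_smul v
    simpa only [mul_one] using hu.unique hv
  have hcomp : slWt 7 (μ + 1) ∘ σ = slWt 7 (ν + 1) ∘ τ := smul_left_cancel u h
  have hslWt : slWt 7 (μ + 1) = slWt 7 (ν + 1) :=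
    ((strictAnti_slWt_add_one μ).range_inj (strictAnti_slWt_add_one ν)).1 (by
      rw [← EquivLike.range_comp _ σ, hcomp, EquivLike.range_comp])
  obtain rfl : μ = ν := add_right_cancel (slWt_injective hslWt)
  rw [Equiv.ext fun i => (strictAnti_slWt_add_one μ).injective (congrFun hcomp i)]

theorem reflection_comp_perm {k : ℕ} (a x : Fin k → ℚ) (σ : Equiv.Perm (Fin k)) :
    reflection a (x ∘ σ) = reflection (a ∘ σ.symm) x ∘ σ := by
  ext i
  simp [reflection_apply, ← dotProduct_comp_equiv_symm]

theorem reflection_mem_orbitVectors (i : Option (Fin 6)) {x : Fin 8 → ℚ}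
    (hx : x ∈ orbitVectors spinHighestWeights) :
    reflection (e7Simple i) x ∈ orbitVectors spinHighestWeights := by
  obtain ⟨μ, hμ, σ, u, rfl⟩ := mem_orbitVectors.1 hx
  rw [Units.smul_def, map_zsmul]
  rcases i with _ | i
  · have hmem : e7Simple none ∈ exteriorWeights 7 4 :=
      mem_exteriorWeights.2 ⟨{3, 4, 5, 6}, by decide, rfl⟩
    obtain ⟨v, ν, hν, τ, h⟩ := exists_reflection_eq hμ (exteriorWeights_comp_perm σ.symm hmem)
    refine mem_orbitVectors.2 ⟨ν, hν, τ * σ, u * v, ?_⟩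
    rw [reflection_comp_perm, h, ← Units.smul_def, mul_smul]
    rfl
  · refine mem_orbitVectors.2 ⟨μ, hμ, σ * Equiv.swap i.castSucc.castSucc i.succ.castSucc, u, ?_⟩
    rw [e7Simple, reflection_single_sub_single]
    rfl

theorem weylSign_orbitVector {μ : Fin 7 → ℕ} (hμ : μ ∈ spinHighestWeights)
    (σ : Equiv.Perm (Fin 8)) (u : ℤˣ) :
    weylSign e7Roots (orbitVector (μ, σ, u)) = u * Equiv.Perm.sign σ := by
  rcases Int.units_eq_one_or u with rfl | rfl
  · simp [orbitVector, weylSign_e7Roots_comp_perm, weylSign_of_mem_spinHighestWeights hμ]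
  · simp [orbitVector, weylSign_e7Roots_comp_perm, weylSign_of_mem_spinHighestWeights hμ,
      weylSign_e7Roots_neg]

theorem weylDenominator_e7Roots_eq_sum_orbitVectors :
    weylDenominator e7Roots =
      ∑ x ∈ orbitVectors spinHighestWeights, weylSign e7Roots x • mono x := by
  refine isPositiveSystem_e7.weylDenominator_eq_sum ?_
    (fun i x => reflection_mem_orbitVectors i) ?_ ?_
  · exact mem_orbitVectors.2 ⟨![0, 0, 0, 0, 0, 0, 10], by decide +kernel, 1, 1, by
      rw [weylVector_e7Roots, one_smul]; rfl⟩
  · intro x hx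
    obtain ⟨μ, hμ, σ, u, rfl⟩ := mem_orbitVectors.1 hx
    have hρ : weylVector e7Roots ⬝ᵥ weylVector e7Roots = 399 / 2 := by
      rw [weylVector_e7Roots]
      exact dot_self_of_mem_spinHighestWeights (by decide +kernel)
    rw [hρ, ← dot_self_of_mem_spinHighestWeights hμ]
    rcases Int.units_eq_one_or u with rfl | rfl <;> simp
  · intro x hx i
    obtain ⟨μ, hμ, σ, u, rfl⟩ := mem_orbitVectors.1 hx
    refine (((isOfClass_of_mem_spinHighestWeights hμ).comp_perm σ).units_smul u
      ).exists_int_dotProduct ?_ i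
    rw [Units.smul_def]
    simp only [Pi.smul_apply, Function.comp_apply, ← smul_sum, Equiv.sum_comp σ (slWt 7 (μ + 1)),
      sum_slWt, smul_zero]

theorem altA_slWt_one_mul_prod_halfRoots :
    altA 7 (slWt 7 1) * ∏ β ∈ halfRoots, rootFactor β =
      ∑ μ ∈ spinHighestWeights, (altA 7 (slWt 7 (μ + 1)) - altA 7 (-slWt 7 (μ + 1))) := by
  have hden : altA 7 (slWt 7 1) * ∏ β ∈ halfRoots, rootFactor β = weylDenominator e7Roots := by
    rw [altA_slWt_one_eq_weylDenominator, weylDenominator, ← prod_e7Roots, ← weylDenominator]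
  rw [hden, weylDenominator_e7Roots_eq_sum_orbitVectors, sum_orbitVectors orbitVector_injOn]
  refine sum_congr rfl fun μ hμ => ?_
  rw [altA, altA, ← sum_sub_distrib]
  refine sum_congr rfl fun σ _ => ?_
  rw [UnitsInt.univ, sum_pair (by decide), weylSign_orbitVector hμ, weylSign_orbitVector hμ,
    orbitVector, orbitVector, one_smul, Units.val_one, one_mul, Units.val_neg, Units.val_one,
    neg_one_mul, neg_smul, ← sub_eq_add_neg, Units.neg_smul, one_smul]
  rfl

end E7Orbit

/-! ### Restriction of the half-spin character -/

section Support

variable {k : ℕ}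

/-- The elements of the character ring that involve only weights in `P`. -/
def supportedOn (P : Set (Fin k → ℚ)) : Submodule ℤ (CharRing k) where
  carrier := {F | ∀ x, F.coeff x ≠ 0 → x ∈ P}
  zero_mem' := by simp
  add_mem' {F G} hF hG x hx := by
    by_contra h
    exact hx (by simp [not_imp_comm.1 (hF x) h, not_imp_comm.1 (hG x) h])
  smul_mem' c F hF x hx := hF x fun h => hx (by
    rw [AddMonoidAlgebra.coeff_smul, Finsupp.smul_apply, h, smul_zero])

theorem mono_mem_supportedOn {P : Set (Fin k → ℚ)} {x : Fin k → ℚ} (hx : x ∈ P) :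
    mono x ∈ supportedOn P := fun y hy => by
  rw [coeff_mono] at hy
  rwa [← of_not_not fun h => hy (if_neg h)]

theorem eq_of_sub_eq_sub_of_mem_supportedOn {P Q : Set (Fin k → ℚ)} (hPQ : Disjoint P Q)
    {E F G H : CharRing k} (hE : E ∈ supportedOn P) (hF : F ∈ supportedOn Q)
    (hG : G ∈ supportedOn P) (hH : H ∈ supportedOn Q) (h : E - F = G - H) : E = G := by
  have hsub : E - G = F - H := by linear_combination h
  rw [← sub_eq_zero]
  ext x
  by_contra hx
  exact Set.disjoint_left.1 hPQ (sub_mem hE hG x hx) (sub_mem hF hH x (hsub ▸ hx))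

theorem altA_mem_supportedOn {r : ℕ} {P : Set (Fin (r + 1) → ℚ)} {x : Fin (r + 1) → ℚ}
    (hx : ∀ σ : Equiv.Perm (Fin (r + 1)), x ∘ σ ∈ P) : altA r x ∈ supportedOn P :=
  sum_mem fun σ _ => Submodule.smul_mem _ _ (mono_mem_supportedOn (hx σ))

theorem coeff_sum_map_mono (m : Multiset (Fin k → ℚ)) (x : Fin k → ℚ) :
    (m.map mono).sum.coeff x = m.count x := by
  induction m using Multiset.induction_on with
  | empty => simp
  | cons y m ih => simp [ih, coeff_mono, Multiset.count_cons, eq_comm, add_comm]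

theorem sum_map_mono_injective :
    Function.Injective fun m : Multiset (Fin k → ℚ) => (m.map mono).sum := fun m m' h => by
  ext x
  have hx := congrArg (fun F : CharRing k => F.coeff x) h
  simpa [coeff_sum_map_mono] using hx

end Support

section HalfSpin

variable {n k : ℕ}

/-- The restriction, along the torus embedding recorded by `w`, of the character of the half-spin
module with weights `½ ε`, `∏ ε i = u`. -/
def halfSpinSum (u : ℤˣ) (w : Fin n → Fin k → ℚ) : CharRing k :=
  ∑ ε : Fin n → ℤˣ with ∏ i, ε i = u, mono (∑ i, spinWeight ε i • w i)

theorem resChar_halfSpinChar {r : ℕ} (w : Fin n → Fin (r + 1) → ℚ) :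
    resChar w (halfSpinChar n) = halfSpinSum 1 w := by
  have hmap : resChar w = charMap (Fintype.linearCombination ℚ w).toAddMonoidHom := rfl
  simp only [hmap, halfSpinChar, map_sum, charMap_mono]
  rfl

theorem halfSpinSum_mul_altA_mem_supportedOn {r : ℕ} {P : Set (Fin (r + 1) → ℚ)} {u : ℤˣ}
    {w : Fin n → Fin (r + 1) → ℚ} {x : Fin (r + 1) → ℚ}
    (hP : ∀ ε : Fin n → ℤˣ, ∏ i, ε i = u →
      ∀ σ : Equiv.Perm (Fin (r + 1)), ∑ i, spinWeight ε i • w i + x ∘ σ ∈ P) :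
    halfSpinSum u w * altA r x ∈ supportedOn P := by
  rw [halfSpinSum, altA, sum_mul_sum]
  refine sum_mem fun ε hε => sum_mem fun σ _ => ?_
  rw [mul_smul_comm, mono_mul_mono]
  exact Submodule.smul_mem _ _ (mono_mem_supportedOn (hP ε (mem_filter.1 hε).2 σ))

theorem prod_rootFactor_eq_sub (w : Fin n → Fin k → ℚ) :
    ∏ i, rootFactor (w i) = halfSpinSum 1 w - halfSpinSum (-1) w := by
  have hsplit : ∀ ε : Fin n → ℤˣ, ∏ i, ε i = -1 ↔ ¬ ∏ i, ε i = 1 := fun ε =>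
    ⟨fun h => by rw [h]; decide, Int.units_ne_iff_eq_neg.1⟩
  rw [prod_rootFactor_eq_sum_signs, halfSpinSum, halfSpinSum, ← sum_filter_add_sum_filter_not univ
    fun ε : Fin n → ℤˣ => ∏ i, ε i = 1, sub_eq_add_neg, ← sum_neg_distrib]
  simp only [← hsplit]
  congr 1
  · exact sum_congr rfl fun ε hε => by simp [(mem_filter.1 hε).2]
  · exact sum_congr rfl fun ε hε => by rw [(mem_filter.1 hε).2]; simp

theorem exists_sum_units_eq {ι : Type*} (s : Finset ι) (ε : ι → ℤˣ) :
    ∃ m : ℤ, ∑ i ∈ s, (ε i : ℤ) = 4 * m + (#s - 1 + (∏ i ∈ s, ε i : ℤˣ)) := by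
  classical
  induction s using Finset.induction_on with
  | empty => exact ⟨0, by simp⟩
  | insert a s ha ih =>
    obtain ⟨m, hm⟩ := ih
    rw [sum_insert ha, prod_insert ha, card_insert_of_notMem ha, hm]
    rcases Int.units_eq_one_or (ε a) with h | h <;>
      rcases Int.units_eq_one_or (∏ i ∈ s, ε i) with h' | h' <;> rw [h, h']
    · exact ⟨m, by push_cast; ring⟩
    · exact ⟨m, by push_cast; ring⟩
    · exact ⟨m, by push_cast; ring⟩
    · exact ⟨m - 1, by push_cast; ring⟩

end HalfSpin

/-! ### The weights of the natural module -/

section Weights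

theorem sum_mono_eq_of_wtSys {n : ℕ} {w : Fin n → Fin 8 → ℚ}
    (hw : WtSys CType.D n 7 (e 7 4) w) :
    ∑ i, (mono (w i) + mono (-w i)) = ∑ x ∈ exteriorWeights 7 4, mono x := by
  have hmul : (∑ x ∈ exteriorWeights 7 4, mono x) * altA 7 (rhoA 7) =
      altA 7 (slWt 7 (e 7 4) + rhoA 7) := sum_exteriorWeights_mul_altA 3
  rw [WtSys, ← hmul] at hw
  simpa using mul_right_cancel₀ altA_rhoA_ne_zero hw

theorem map_add_map_neg_eq_of_wtSys {n : ℕ} {w : Fin n → Fin 8 → ℚ}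
    (hw : WtSys CType.D n 7 (e 7 4) w) :
    univ.val.map w + univ.val.map (fun i => -w i) = (exteriorWeights 7 4).val := by
  refine sum_map_mono_injective (Eq.trans ?_ (sum_mono_eq_of_wtSys hw))
  simp only
  rw [Multiset.map_add, Multiset.sum_add, Multiset.map_map, Multiset.map_map, sum_add_distrib]
  rfl

-- Exactly one of the weights `±w i` has last coordinate `-1/2`.
theorem exists_map_units_smul_eq_halfRoots {n : ℕ} {w : Fin n → Fin 8 → ℚ}
    (hw : WtSys CType.D n 7 (e 7 4) w) :
    ∃ η : Fin n → ℤˣ, univ.val.map (fun i => η i • w i) = halfRoots.val := by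
  have hweights := map_add_map_neg_eq_of_wtSys hw
  have hmem : ∀ i, w i ∈ exteriorWeights 7 4 := fun i => by
    rw [← mem_val, ← hweights, Multiset.mem_add]
    exact Or.inl (Multiset.mem_map_of_mem w (mem_univ_val i))
  have hneg : ∀ i, (-w i) 7 = -1 / 2 ↔ ¬ w i 7 = -1 / 2 := fun i => by
    rcases eq_half_or_eq_neg_half (hmem i) 7 with h | h <;> simp [h] <;> norm_num
  have hhalf : halfRoots = (exteriorWeights 7 4).filter fun x => x 7 = -1 / 2 := by
    ext x
    rw [mem_halfRoots, mem_filter]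
  refine ⟨fun i => if w i 7 = -1 / 2 then 1 else -1, ?_⟩
  rw [hhalf, filter_val, ← hweights, Multiset.filter_add, Multiset.filter_map, Multiset.filter_map]
  simp only [Function.comp_def, hneg]
  conv_lhs => rw [← Multiset.filter_add_not (fun i => w i 7 = -1 / 2) univ.val, Multiset.map_add]
  congr 1 <;> refine Multiset.map_congr rfl fun i hi => ?_
  · rw [if_pos (Multiset.mem_filter.1 hi).2, one_smul]
  · rw [if_neg (Multiset.mem_filter.1 hi).2, Units.neg_smul, one_smul]

theorem rootFactor_units_smul {k : ℕ} (u : ℤˣ) (β : Fin k → ℚ) :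
    rootFactor (u • β) = (u : ℤ) • rootFactor β := by
  rcases Int.units_eq_one_or u with rfl | rfl <;> simp [rootFactor_neg]

theorem prod_rootFactor_of_map_units_smul_eq {n : ℕ} {w : Fin n → Fin 8 → ℚ} {η : Fin n → ℤˣ}
    (hη : univ.val.map (fun i => η i • w i) = halfRoots.val) :
    ∏ i, rootFactor (w i) = ((∏ i, η i : ℤˣ) : ℤ) • ∏ β ∈ halfRoots, rootFactor β := by
  have hprod : ∏ β ∈ halfRoots, rootFactor β = ∏ i, (η i : ℤ) • rootFactor (w i) := by
    simp only [← rootFactor_units_smul]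
    rw [Finset.prod, ← hη, Multiset.map_map]
    rfl
  rw [hprod]
  simp only [zsmul_eq_mul, prod_mul_distrib, ← Int.cast_prod, ← Units.coe_prod]
  rw [← mul_assoc, ← Int.cast_mul, ← Units.val_mul, Int.units_mul_self]
  simp

/-- The weights whose last coordinate is that of a weight of class `u`. -/
def lastCoordOfClass (u : ℤˣ) : Set (Fin 8 → ℚ) := {x | ∃ m : ℤ, x 7 = m - (u : ℤ) / 4}

theorem disjoint_lastCoordOfClass {u v : ℤˣ} (huv : u ≠ v) :
    Disjoint (lastCoordOfClass u) (lastCoordOfClass v) :=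
  Set.disjoint_left.2 fun _ ⟨_, hm⟩ ⟨_, hn⟩ => huv (units_eq_of_intCast_sub_eq (hm.symm.trans hn))

theorem sum_spinWeight_smul_add_mem_lastCoordOfClass {n : ℕ} {w : Fin n → Fin 8 → ℚ}
    {η : Fin n → ℤˣ} (hη : univ.val.map (fun i => η i • w i) = halfRoots.val) (ε : Fin n → ℤˣ)
    (σ : Equiv.Perm (Fin 8)) :
    ∑ i, spinWeight ε i • w i + slWt 7 1 ∘ σ ∈ lastCoordOfClass ((∏ i, ε i) * ∏ i, η i) := by
  have hw : ∀ i, w i 7 = -(η i : ℤ) / 2 := fun i => by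
    have hmem : η i • w i ∈ halfRoots := by
      rw [← mem_val, ← hη]
      exact Multiset.mem_map_of_mem _ (mem_univ_val i)
    have h7 := (mem_halfRoots.1 hmem).2
    rcases Int.units_eq_one_or (η i) with h | h <;> rw [h] at h7 ⊢ <;> simp at h7 ⊢ <;> linarith
  have hn : n = 35 := by simpa [card_halfRoots] using congrArg Multiset.card hη
  obtain ⟨m, hm⟩ := exists_sum_units_eq univ (ε * η)
  have hlast : (∑ i, spinWeight ε i • w i) 7 = -(∑ i, ((ε * η) i : ℤ) : ℤ) / 4 := by
    simp only [Finset.sum_apply, Pi.smul_apply, hw, spinWeight, smul_eq_mul, Pi.mul_apply]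
    push_cast
    rw [← sum_neg_distrib, sum_div]
    exact sum_congr rfl fun i _ => by ring
  refine ⟨-m - 5 - (σ 7 : ℕ), ?_⟩
  rw [Pi.add_apply, hlast, Function.comp_apply, slWt_one, hm]
  simp only [Pi.mul_apply, prod_mul_distrib, card_univ, Fintype.card_fin]
  push_cast [hn]
  ring

theorem halfSpinSum_mul_altA_slWt_one_mem_supportedOn {n : ℕ} {w : Fin n → Fin 8 → ℚ}
    {η : Fin n → ℤˣ} (hη : univ.val.map (fun i => η i • w i) = halfRoots.val) (u : ℤˣ) :
    halfSpinSum u w * altA 7 (slWt 7 1) ∈ supportedOn (lastCoordOfClass (u * ∏ i, η i)) := by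
  refine halfSpinSum_mul_altA_mem_supportedOn fun ε hε σ => ?_
  rw [← hε]
  exact sum_spinWeight_smul_add_mem_lastCoordOfClass hη ε σ

theorem altA_units_smul_mem_supportedOn {μ : Fin 7 → ℕ} (hμ : μ ∈ spinHighestWeights) (u : ℤˣ) :
    altA 7 (u • slWt 7 (μ + 1)) ∈ supportedOn (lastCoordOfClass u) :=
  altA_mem_supportedOn fun σ => by
    have h := ((isOfClass_of_mem_spinHighestWeights hμ).units_smul u).comp_perm σ 7
    rwa [mul_one] at h

theorem resChar_halfSpinChar_mul_altA {n : ℕ} {w : Fin n → Fin 8 → ℚ} {η : Fin n → ℤˣ} {v : ℤˣ}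
    (hη : univ.val.map (fun i => η i • w i) = halfRoots.val) (hv : ∏ i, η i = v) :
    resChar w (halfSpinChar n) * altA 7 (slWt 7 1) =
      ∑ μ ∈ spinHighestWeights, altA 7 (v • slWt 7 (μ + 1)) := by
  have hclass := halfSpinSum_mul_altA_slWt_one_mem_supportedOn hη
  have hdiff : halfSpinSum 1 w * altA 7 (slWt 7 1) - halfSpinSum (-1) w * altA 7 (slWt 7 1) =
      ∑ μ ∈ spinHighestWeights, altA 7 (v • slWt 7 (μ + 1)) -
        ∑ μ ∈ spinHighestWeights, altA 7 (-v • slWt 7 (μ + 1)) := by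
    rw [← sub_mul, ← prod_rootFactor_eq_sub, prod_rootFactor_of_map_units_smul_eq hη, hv,
      smul_mul_assoc, mul_comm _ (altA 7 _), altA_slWt_one_mul_prod_halfRoots, sum_sub_distrib]
    rcases Int.units_eq_one_or v with rfl | rfl <;> simp
  rw [hv] at hclass
  rw [resChar_halfSpinChar]
  refine eq_of_sub_eq_sub_of_mem_supportedOn
    (disjoint_lastCoordOfClass (units_ne_neg_self v)) ?_ ?_ ?_ ?_ hdiff
  · simpa only [one_mul] using hclass 1
  · simpa only [neg_one_mul] using hclass (-1)
  · exact sum_mem fun μ hμ => altA_units_smul_mem_supportedOn hμ v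
  · exact sum_mem fun μ hμ => altA_units_smul_mem_supportedOn hμ (-v)

end Weights

/-! ### Decomposition -/

section Decomposition

variable {r : ℕ}

theorem slWt_comp_rev (d : Fin r → ℕ) (i : Fin (r + 1)) :
    slWt r (d ∘ Fin.rev) i = -slWt r d i.rev := by
  have hlift : partLift r (d ∘ Fin.rev) i = ∑ j, (d j : ℚ) - partLift r d i.rev := by
    have hiff : ∀ j : Fin r, (i : ℕ) ≤ (j.rev : ℕ) ↔ ¬ (i.rev : ℕ) ≤ (j : ℕ) := fun j => by
      rw [Fin.val_rev, Fin.val_rev]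
      omega
    rw [partLift, partLift, eq_sub_iff_add_eq', ← sum_filter_add_sum_filter_not univ
      fun j : Fin r => (i.rev : ℕ) ≤ (j : ℕ)]
    simp only [← hiff, sum_filter]
    exact congrArg₂ (· + ·) rfl (Fintype.sum_equiv Fin.revPerm _ _ fun j => by simp)
  have hshift : ∑ j : Fin r, ((j : ℚ) + 1) * ((d ∘ Fin.rev) j : ℚ) =
      (r + 1) * ∑ j, (d j : ℚ) - ∑ j : Fin r, ((j : ℚ) + 1) * (d j : ℚ) := by
    rw [← Equiv.sum_comp Fin.revPerm, mul_sum, ← sum_sub_distrib]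
    refine sum_congr rfl fun j _ => ?_
    have hj : ((j.rev : ℕ) : ℚ) = r - (j + 1) := by
      rw [Fin.val_rev, Nat.cast_sub j.isLt]
      push_cast
      rfl
    rw [Fin.revPerm_apply, Function.comp_apply, Fin.rev_rev, hj]
    ring
  rw [slWt, slWt, hlift, hshift]
  field_simp
  ring

theorem altA_neg_slWt_add_one (μ : Fin 7 → ℕ) :
    altA 7 (-slWt 7 (μ + 1)) = altA 7 (slWt 7 (μ ∘ Fin.rev + 1)) := by
  have hrev : slWt 7 (μ ∘ Fin.rev + 1) = (-slWt 7 (μ + 1)) ∘ Fin.revPerm := by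
    ext i
    exact slWt_comp_rev (μ + 1) i
  have hsign : Equiv.Perm.sign (Fin.revPerm : Equiv.Perm (Fin 8)) = 1 := by decide
  have h := altA_comp_perm (-slWt 7 (μ + 1)) Fin.revPerm
  rw [hsign, Units.val_one, one_smul] at h
  rw [hrev]
  exact h.symm

theorem decomp_indicator {F : CharRing (r + 1)} {T : Finset (Fin r → ℕ)}
    (h : F * altA r (slWt r 1) = ∑ μ ∈ T, altA r (slWt r (μ + 1))) :
    Decomp r F (Finsupp.indicator T fun _ _ => 1) := by
  rw [Decomp, altA_rhoA, mul_left_comm, h, mul_sum, Finsupp.sum_indicator_index _ (by simp)]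
  simp [altA_slWt_add_rhoA]

theorem support_indicator_one {α : Type*} (T : Finset α) :
    (Finsupp.indicator T fun _ _ => 1 : α →₀ ℕ).support = T := by
  classical
  ext a
  simp [Finsupp.indicator_apply]

theorem card_spinHighestWeights : #spinHighestWeights = 36 := by decide +kernel

theorem sum_dimA_spinHighestWeights : ∑ μ ∈ spinHighestWeights, dimA 7 μ = 2 ^ 34 := by
  decide +kernel

theorem dimA_comp_rev (μ : Fin r → ℕ) : dimA r (μ ∘ Fin.rev) = dimA r μ := by
  have hdiff : ∀ (d : Fin r → ℕ) p q, partLift r d p - partLift r d q = slWt r d p - slWt r d q :=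
    fun d p q => by simp only [slWt]; ring
  simp only [dimA, hdiff, slWt_comp_rev]
  refine prod_nbij' (fun p => (p.2.rev, p.1.rev)) (fun p => (p.2.rev, p.1.rev)) ?_ ?_ ?_ ?_ ?_
  · simp
  · simp
  · simp
  · simp
  · intro p _
    simp only [Fin.val_rev, Nat.cast_sub p.1.isLt, Nat.cast_sub p.2.isLt]
    push_cast
    congr 1 <;> ring

theorem exists_finset_resChar_halfSpinChar_mul_altA {n : ℕ} {w : Fin n → Fin 8 → ℚ}
    (hw : WtSys CType.D n 7 (e 7 4) w) : ∃ T : Finset (Fin 7 → ℕ),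
      resChar w (halfSpinChar n) * altA 7 (slWt 7 1) = ∑ μ ∈ T, altA 7 (slWt 7 (μ + 1)) ∧
        #T = 36 ∧ ∑ μ ∈ T, dimA 7 μ = 2 ^ 34 := by
  obtain ⟨η, hη⟩ := exists_map_units_smul_eq_halfRoots hw
  have hrev : Function.Injective fun μ : Fin 7 → ℕ => μ ∘ Fin.rev :=
    Fin.rev_surjective.injective_comp_right
  rcases Int.units_eq_one_or (∏ i, η i) with hv | hv
  · refine ⟨spinHighestWeights, ?_, card_spinHighestWeights, sum_dimA_spinHighestWeights⟩
    simpa only [one_smul] using resChar_halfSpinChar_mul_altA hη hv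
  · refine ⟨spinHighestWeights.map ⟨_, hrev⟩, ?_, ?_, ?_⟩
    · simpa only [Units.neg_smul, one_smul, altA_neg_slWt_add_one, sum_map,
        Function.Embedding.coeFn_mk] using resChar_halfSpinChar_mul_altA hη hv
    · rw [card_map, card_spinHighestWeights]
    · rw [sum_map, ← sum_dimA_spinHighestWeights]
      exact sum_congr rfl fun μ _ => dimA_comp_rev μ

end Decomposition

end MFPaper

/-- **Lemma 10.2 (spin module for `A₇ < D₃₅`).**  Let `X = A₇` be embedded in
`Y = D₃₅ = SO₇₀` via the 70-dimensional irreducible representation `δ = ω₄`, and let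
`V = V_Y(λ₃₅)` be a half-spin module for `Y` (of dimension `2³⁴`).  Then `V↓X` is
multiplicity-free; more precisely, `V↓X` is the direct sum of exactly `36` pairwise
non-isomorphic irreducible `X`-modules, and in particular the sum of the dimensions
of these `36` irreducibles equals `2³⁴`. -/
theorem thm_spin_A7_D35 :
    IsMFRes CType.D 35 7 (e 7 4) (e 35 35) ∧
    (∀ w, WtSys CType.D 35 7 (e 7 4) w →
      ∀ f, IsCharY CType.D 35 (e 35 35) f →
        ∃ c : (Fin 7 → ℕ) →₀ ℕ,
          Decomp 7 (resChar w f) c ∧ (∀ μ, c μ ≤ 1) ∧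
          c.support.card = 36 ∧
          (∑ μ ∈ c.support, dimA 7 μ) = 2 ^ 34) := by
  suffices h : ∀ w, WtSys CType.D 35 7 (e 7 4) w → ∀ f, IsCharY CType.D 35 (e 35 35) f →
      ∃ c : (Fin 7 → ℕ) →₀ ℕ, Decomp 7 (resChar w f) c ∧ (∀ μ, c μ ≤ 1) ∧
        c.support.card = 36 ∧ (∑ μ ∈ c.support, dimA 7 μ) = 2 ^ 34 by
    refine ⟨fun w hw f hf => ?_, h⟩
    obtain ⟨c, hdecomp, hle, -⟩ := h w hw f hf
    exact ⟨c, hdecomp, hle⟩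
  intro w hw f hf
  obtain ⟨T, hT, hcard, hdim⟩ := exists_finset_resChar_halfSpinChar_mul_altA hw
  refine ⟨Finsupp.indicator T fun _ _ => 1, ?_, fun μ => ?_, ?_, ?_⟩
  · rw [eq_halfSpinChar_of_isCharY hf]
    exact decomp_indicator hT
  · rw [Finsupp.indicator_apply]
    split_ifs <;> simp
  · rw [support_indicator_one, hcard]
  · rw [support_indicator_one, hdim]
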